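/- arXiv:1106.5942 — 5 statements merged into one kernel-verified Lean document; each statement's English description precedes it below -/
import Mathlib

section
/- Let 𝒜 be a category, P a partially ordered set, and G a group, satisfying the amalgamation hypotheses (A1)–(A5) together with (A6): for each object y of 𝒜 and each m ∈ G there exists an isomorphism f : x ⟶ y (for some object x) with α(F(f)) = m. Then the prescription p · m = β(x), whenever f : x ⟶ β'(p) is an isomorphism in 𝒜 with α(F(f)) = m, is well defined — i.e. independent of the choice of such an isomorphism f — and defines a monotone right action of G on P: p · 1 = p, p · (m * n) = (p · m) · n, and p ≤ q implies p · m ≤ q · m. -/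
open CategoryTheory

universe u v w x

/-!
The composite `α ∘ F` is a functor to the one-object category of the monoid, and so gives each
morphism a degree. If `f : x ≅ β' p` and `g : y ≅ β' q` have the same degree and
`k : β' p ⟶ β' q` has degree one, then `f ≫ k ≫ g⁻¹ : x ⟶ y` has degree one, so `β x ≤ β y`. For
`p = q` this shows that `p · m` is independent of choices, and for `p ≤ q` that `· m` is monotone.
If `f : x ≅ β' p` and `g : y ≅ β' (β x)` have degrees `m` and `n`, then splicing in an isomorphism
`h : x ≅ β' (β x)` of degree one gives `g ≫ h⁻¹ ≫ f : y ≅ β' p` of degree `m * n`.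
-/

section Degree

variable {𝒜 : Type u} [Category.{v} 𝒜] {M : Type x} [Monoid M]

/-- The composite `α ∘ F` of (A2) and (A3), as a functor to the one-object category of `M`. There
`f ≫ g` is `g * f`, so `α` is multiplicative with respect to `f * g = g ≫ f` on `End O`. -/
def degreeFunctor {O : 𝒜} (F : ∀ {x y : 𝒜}, (x ⟶ y) → (O ⟶ O))
    (F_id : ∀ x : 𝒜, F (𝟙 x) = 𝟙 O)
    (F_comp : ∀ {x y z : 𝒜} (f : x ⟶ y) (g : y ⟶ z), F (f ≫ g) = F f ≫ F g)
    (α : (O ⟶ O) → M) (α_one : α (𝟙 O) = 1)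
    (α_mul : ∀ f g : O ⟶ O, α (f ≫ g) = α g * α f) : 𝒜 ⥤ SingleObj M where
  obj _ := SingleObj.star M
  map f := α (F f)
  map_id x := (congrArg α (F_id x)).trans α_one
  map_comp f g := (congrArg α (F_comp f g)).trans (α_mul (F f) (F g))

variable (D : 𝒜 ⥤ SingleObj M)

/-- The degree of a morphism: its image under a functor to the one-object category of `M`, read as
an element of `M`. For `degreeFunctor` it is `α (F f)`. -/
def degree {x y : 𝒜} (f : x ⟶ y) : M :=
  D.map f

theorem degree_id (x : 𝒜) : degree D (𝟙 x) = 1 :=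
  D.map_id x

theorem degree_comp {x y z : 𝒜} (f : x ⟶ y) (g : y ⟶ z) :
    degree D (f ≫ g) = degree D g * degree D f :=
  D.map_comp f g

theorem degree_inv_mul_degree_hom {x y : 𝒜} (f : x ≅ y) :
    degree D f.inv * degree D f.hom = 1 := by
  rw [← degree_comp, f.hom_inv_id, degree_id]

theorem degree_inv_eq_one {x y : 𝒜} {f : x ≅ y} (hf : degree D f.hom = 1) :
    degree D f.inv = 1 := by
  simpa only [hf, mul_one] using degree_inv_mul_degree_hom D f

/-- The preorder on objects in (A3): `x` lies below `y` when some morphism `x ⟶ y` has degree one.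
It is a relation rather than a `Preorder` instance because it depends on `D`. -/
def DegreeOneLE (x y : 𝒜) : Prop :=
  ∃ f : x ⟶ y, degree D f = 1

variable {D}

theorem DegreeOneLE.of_iso_of_degree_eq {x x' y y' : 𝒜} (h : DegreeOneLE D x' y')
    (f : x ≅ x') (g : y ≅ y') (hfg : degree D f.hom = degree D g.hom) : DegreeOneLE D x y := by
  obtain ⟨k, hk⟩ := h
  refine ⟨f.hom ≫ k ≫ g.inv, ?_⟩
  rw [degree_comp, degree_comp, hk, mul_one, hfg, degree_inv_mul_degree_hom]

end Degree

section Translate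

variable {𝒜 : Type u} [Category.{v} 𝒜] {P : Type w} {M : Type x} [Monoid M]

/-- The relation `p · m = q` of the prescription: `q = β x` for some isomorphism `x ≅ β' p` of
degree `m`. Keeping it a relation postpones the choice of `x` until uniqueness of `q` is known. -/
def IsTranslate (D : 𝒜 ⥤ SingleObj M) (β : 𝒜 → P) (β' : P → 𝒜) (p : P) (m : M) (q : P) : Prop :=
  ∃ (x : 𝒜) (f : x ≅ β' p), degree D f.hom = m ∧ β x = q

variable {D : 𝒜 ⥤ SingleObj M} {β : 𝒜 → P} {β' : P → 𝒜}

theorem isTranslate_one (β_β' : Function.LeftInverse β β') (p : P) : IsTranslate D β β' p 1 p :=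
  ⟨β' p, Iso.refl _, degree_id D _, β_β' p⟩

theorem IsTranslate.mul (unit : ∀ x, ∃ f : x ≅ β' (β x), degree D f.hom = 1) {p q r : P} {m n : M}
    (hm : IsTranslate D β β' p m q) (hn : IsTranslate D β β' q n r) :
    IsTranslate D β β' p (m * n) r := by
  obtain ⟨x, f, rfl, rfl⟩ := hm
  obtain ⟨y, g, rfl, rfl⟩ := hn
  obtain ⟨h, hh⟩ := unit x
  refine ⟨y, g ≪≫ h.symm ≪≫ f, ?_, rfl⟩
  simp only [Iso.trans_hom, Iso.symm_hom, degree_comp, degree_inv_eq_one D hh, mul_one]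

theorem IsTranslate.mono [Preorder P] (β_mono : ∀ x y, DegreeOneLE D x y → β x ≤ β y)
    (β'_mono : ∀ p q, p ≤ q → DegreeOneLE D (β' p) (β' q)) {p q p' q' : P} {m : M}
    (hp : IsTranslate D β β' p m p') (hq : IsTranslate D β β' q m q') (hpq : p ≤ q) :
    p' ≤ q' := by
  obtain ⟨x, f, hf, rfl⟩ := hp
  obtain ⟨y, g, hg, rfl⟩ := hq
  exact β_mono x y ((β'_mono p q hpq).of_iso_of_degree_eq f g (hf.trans hg.symm))

theorem IsTranslate.unique [PartialOrder P] (β_mono : ∀ x y, DegreeOneLE D x y → β x ≤ β y)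
    (β'_mono : ∀ p q, p ≤ q → DegreeOneLE D (β' p) (β' q)) {p q r : P} {m : M}
    (hq : IsTranslate D β β' p m q) (hr : IsTranslate D β β' p m r) : q = r :=
  le_antisymm (hq.mono β_mono β'_mono hr le_rfl) (hr.mono β_mono β'_mono hq le_rfl)

end Translate

theorem stmt2_general {𝒜 : Type u} [Category.{v} 𝒜] {P : Type w} [PartialOrder P]
    {M : Type x} [Monoid M] (D : 𝒜 ⥤ SingleObj M) (β : 𝒜 → P) (β' : P → 𝒜)
    (β_mono : ∀ x y, DegreeOneLE D x y → β x ≤ β y)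
    (β'_mono : ∀ p q, p ≤ q → DegreeOneLE D (β' p) (β' q))
    (β_β' : Function.LeftInverse β β')
    (unit : ∀ x, ∃ f : x ≅ β' (β x), degree D f.hom = 1)
    (lift : ∀ (p : P) (m : M), ∃ (x : 𝒜) (f : x ≅ β' p), degree D f.hom = m) :
    ∃ act : P → M → P,
      (∀ (p : P) (m : M) (x : 𝒜) (f : x ≅ β' p), degree D f.hom = m → act p m = β x) ∧
      (∀ p : P, act p 1 = p) ∧
      (∀ (p : P) (m n : M), act p (m * n) = act (act p m) n) ∧
      (∀ (m : M) (p q : P), p ≤ q → act p m ≤ act q m) := by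
  have exists_translate (p : P) (m : M) : ∃ q, IsTranslate D β β' p m q :=
    let ⟨x, f, hf⟩ := lift p m
    ⟨β x, x, f, hf, rfl⟩
  choose act isTranslate_act using exists_translate
  have act_eq {p q : P} {m : M} (h : IsTranslate D β β' p m q) : act p m = q :=
    (isTranslate_act p m).unique β_mono β'_mono h
  exact ⟨act,
    fun p m x f hf => act_eq ⟨x, f, hf, rfl⟩,
    fun p => act_eq (isTranslate_one β_β' p),
    fun p m n => act_eq ((isTranslate_act p m).mul unit (isTranslate_act _ n)),
    fun m p q hpq => (isTranslate_act p m).mono β_mono β'_mono (isTranslate_act q m) hpq⟩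

/-- Under the amalgamation hypotheses (A1)–(A6) for a category `𝒜`,
a poset `P` and a group `G`, the prescription `p · m = β x` whenever `f : x ≅ β' p`
is an isomorphism with `α (F f.hom) = m` is well defined and is a monotone right
action of `G` on `P`.

Here `F` is the faithful retraction of the inclusion `End(0) ↪ 𝒜` (A2), and `α`
is a monoid isomorphism from the endomorphism monoid of the weakly initial object
`0` (with multiplication `f * g = g ≫ f`) to `G` (A3); the preorder on objects is
`x ≤ y iff ∃ f : x ⟶ y, α (F f) = 1`. -/
theorem stmt2 {𝒜 : Type u} [Category.{v} 𝒜] {P : Type w} [PartialOrder P]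
    {G : Type x} [Group G]
    -- (A1): weakly initial object, unique up to isomorphism
    (O : 𝒜) (weakInit : ∀ y : 𝒜, Nonempty (O ⟶ y))
    (weakInitUnique : ∀ O' : 𝒜, (∀ y : 𝒜, Nonempty (O' ⟶ y)) → Nonempty (O ≅ O'))
    -- (A2): faithful retraction of the inclusion of the one-object category End(0)
    (F : ∀ {x y : 𝒜}, (x ⟶ y) → (O ⟶ O))
    (F_id : ∀ x : 𝒜, F (𝟙 x) = 𝟙 O)
    (F_comp : ∀ {x y z : 𝒜} (f : x ⟶ y) (g : y ⟶ z), F (f ≫ g) = F f ≫ F g)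
    (F_faithful : ∀ {x y : 𝒜} (f g : x ⟶ y), F f = F g → f = g)
    (F_retraction : ∀ f : O ⟶ O, F f = f)
    -- (A3): a monoid isomorphism α : End(0) → G
    (α : (O ⟶ O) → G) (α_bij : Function.Bijective α)
    (α_one : α (𝟙 O) = 1)
    (α_mul : ∀ f g : O ⟶ O, α (f ≫ g) = α g * α f)
    -- (A4): an equivalence of preorders between (Ob 𝒜, ≤) and P
    (β : 𝒜 → P) (β' : P → 𝒜)
    (β_mono : ∀ x y : 𝒜, (∃ f : x ⟶ y, α (F f) = 1) → β x ≤ β y)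
    (β'_mono : ∀ p q : P, p ≤ q → ∃ f : β' p ⟶ β' q, α (F f) = 1)
    (β_β' : ∀ p : P, β (β' p) = p)
    (β'_β_le : ∀ x : 𝒜, ∃ f : β' (β x) ⟶ x, α (F f) = 1)
    (le_β'_β : ∀ x : 𝒜, ∃ f : x ⟶ β' (β x), α (F f) = 1)
    -- (A5)
    (A5 : ∀ x : 𝒜, ∃ f : x ≅ β' (β x), α (F f.hom) = 1)
    -- (A6)
    (A6 : ∀ (y : 𝒜) (m : G), ∃ (x : 𝒜) (f : x ≅ y), α (F f.hom) = m) :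
    ∃ act : P → G → P,
      (∀ (p : P) (m : G) (x : 𝒜) (f : x ≅ β' p), α (F f.hom) = m → act p m = β x) ∧
      (∀ p : P, act p 1 = p) ∧
      (∀ (p : P) (m n : G), act p (m * n) = act (act p m) n) ∧
      (∀ (m : G) (p q : P), p ≤ q → act p m ≤ act q m) := by
  exact stmt2_general (degreeFunctor F F_id F_comp α α_one α_mul) β β' β_mono β'_mono β_β' A5
    fun p => A6 (β' p)
end

section
/- Let 𝒜 be a category, P a partially ordered set, and G a group, satisfying the amalgamation hypotheses (A1)–(A5) together with (A6): for each object y of 𝒜 and each m ∈ G there exists an isomorphism f : x ⟶ y (for some object x) with α(F(f)) = m. Then there is a monotone right action of G on P (namely p · m = β(x) for any isomorphism f : x ⟶ β'(p) with α(F(f)) = m) such that the assignment x ↦ β(x) on objects and f ↦ α(F(f)) on morphisms is a well-defined functor from 𝒜 to the Grothendieck category P ⋊ G, and this functor is full, faithful, and essentially surjective, i.e. an equivalence of categories. -/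
open CategoryTheory

universe u v w x

/-- A monotone right action of a monoid `M` on a poset `P`. -/
structure RightAction (M : Type x) (P : Type w) [Monoid M] [PartialOrder P] where
  act : P → M → P
  act_one : ∀ p, act p 1 = p
  act_mul : ∀ p m n, act p (m * n) = act (act p m) n
  act_mono : ∀ (m : M) ⦃p q : P⦄, p ≤ q → act p m ≤ act q m

/-- Objects of the Grothendieck category `P ⋊ M`: the elements of `P`; a morphism
`p ⟶ q` is an element `m : M` with `p ≤ q · m`; identities are `1` and the composite
of `m : p ⟶ q` followed by `n : q ⟶ r` is `n * m`. -/
structure Groth {M : Type x} {P : Type w} [Monoid M] [PartialOrder P]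
    (ρ : RightAction M P) : Type w where
  pt : P

instance {M : Type x} {P : Type w} [Monoid M] [PartialOrder P] (ρ : RightAction M P) :
    Category.{x} (Groth ρ) where
  Hom p q := { m : M // p.pt ≤ ρ.act q.pt m }
  id p := ⟨1, (ρ.act_one p.pt).ge⟩
  comp {p q r} m n :=
    ⟨n.1 * m.1, by rw [ρ.act_mul]; exact le_trans m.2 (ρ.act_mono m.1 n.2)⟩
  id_comp f := Subtype.ext (mul_one _)
  comp_id f := Subtype.ext (one_mul _)
  assoc f g h := Subtype.ext (mul_assoc _ _ _).symm

/-!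
Label each morphism `f` of `𝒜` by `α (F f)`. This is a functor `L` from `𝒜` to the one-object
category on `G`, and (A4) identifies `P` with the poset reflection of its fibre. Isomorphisms are
cartesian, so (A6) makes `L` a fibration, and pulling back along `m` descends to `p ↦ p · m`.
If `z ⟶ y` is cartesian over `m`, morphisms `x ⟶ y` over `m` correspond to morphisms `x ⟶ z` over
`1`, hence `β x ≤ β y · m` exactly when some morphism `x ⟶ y` is labelled `m`: this one equivalence
makes `β` a functor to `P ⋊ G` and makes it full.
-/

section Fibration

theorem isCartesian_map_hom {𝒳 𝒮 : Type*} [Category* 𝒳] [Category* 𝒮] (p : 𝒳 ⥤ 𝒮) {a b : 𝒳}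
    (f : a ≅ b) : p.IsCartesian (p.map f.hom) f.hom :=
  inferInstance

variable {𝒜 : Type u} [Category.{v} 𝒜] {M : Type x} [Monoid M] {P : Type w} [PartialOrder P]
  {L : 𝒜 ⥤ SingleObj M} {β : 𝒜 → P}

theorem isHomLift_iff_map_eq {R S : SingleObj M} {m : R ⟶ S} {x y : 𝒜} {f : x ⟶ y} :
    L.IsHomLift m f ↔ L.map f = m :=
  ⟨by rintro ⟨_⟩; rfl, by rintro rfl; exact .map f⟩

theorem exists_isCartesian_map_eq [L.IsPreFibered] (y : 𝒜) (m : M) :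
    ∃ (x : 𝒜) (f : x ⟶ y), L.IsCartesian (L.map f) f ∧ L.map f = m := by
  obtain ⟨x, f, hf⟩ := Functor.IsPreFibered.exists_isCartesian' (p := L) (a := y)
    (R := SingleObj.star M) m
  obtain rfl := isHomLift_iff_map_eq.1 hf.toIsHomLift
  exact ⟨x, f, hf, rfl⟩

theorem isFibered_of_exists_iso_map_eq
    (h : ∀ (y : 𝒜) (m : M), ∃ (x : 𝒜) (f : x ≅ y), L.map f.hom = m) : L.IsFibered := by
  refine Functor.IsFibered.of_exists_isStronglyCartesian fun y R m ↦ ?_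
  obtain ⟨x, f, hf⟩ := h y m
  have : L.IsHomLift m f.hom := isHomLift_iff_map_eq.2 hf
  exact ⟨x, f.hom, inferInstance⟩

variable (L β) in
/-- `β` exhibits `P` as the poset reflection of the fibre of `L`, that is, of the objects of `𝒜`
preordered by the existence of a morphism over `1`. This is what remains of the equivalence of
preorders (A4) once the quasi-inverse `β'` is forgotten. -/
structure IsPosetReflection : Prop where
  surjective : Function.Surjective β
  le_iff {x y : 𝒜} : β x ≤ β y ↔ ∃ f : x ⟶ y, L.map f = 1

namespace IsPosetReflection

theorem of_quasiInverse {β' : P → 𝒜}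
    (β_mono : ∀ x y : 𝒜, (∃ f : x ⟶ y, L.map f = 1) → β x ≤ β y)
    (β'_mono : ∀ p q : P, p ≤ q → ∃ f : β' p ⟶ β' q, L.map f = 1)
    (β_β' : ∀ p : P, β (β' p) = p)
    (β'_β_le : ∀ x : 𝒜, ∃ f : β' (β x) ⟶ x, L.map f = 1)
    (le_β'_β : ∀ x : 𝒜, ∃ f : x ⟶ β' (β x), L.map f = 1) : IsPosetReflection L β where
  surjective p := ⟨β' p, β_β' p⟩
  le_iff {x y} := by
    refine ⟨fun hxy ↦ ?_, β_mono x y⟩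
    obtain ⟨a, ha⟩ := le_β'_β x
    obtain ⟨b, hb⟩ := β'_mono _ _ hxy
    obtain ⟨c, hc⟩ := β'_β_le y
    exact ⟨a ≫ b ≫ c, by simp only [L.map_comp, SingleObj.comp_as_mul, ha, hb, hc, mul_one]⟩

theorem le_iff_of_isCartesian (hβ : IsPosetReflection L β) {x y z : 𝒜} (f : z ⟶ y)
    [L.IsCartesian (L.map f) f] : β x ≤ β z ↔ ∃ g : x ⟶ y, L.map g = L.map f := by
  rw [hβ.le_iff]
  constructor
  · rintro ⟨h, hh⟩
    exact ⟨h ≫ f, by rw [L.map_comp, SingleObj.comp_as_mul, hh, mul_one]⟩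
  · rintro ⟨g, hg⟩
    have : L.IsHomLift (L.map f) g := isHomLift_iff_map_eq.2 hg
    exact ⟨Functor.IsCartesian.map L (L.map f) f g,
      isHomLift_iff_map_eq.1 (Functor.IsCartesian.map_isHomLift L (L.map f) f g)⟩

theorem le_of_isCartesian (hβ : IsPosetReflection L β) {x x' y y' : 𝒜} (hy : β y ≤ β y')
    (f : x ⟶ y) (f' : x' ⟶ y') [L.IsCartesian (L.map f') f'] (hf : L.map f = L.map f') :
    β x ≤ β x' := by
  obtain ⟨g, hg⟩ := hβ.le_iff.1 hy
  exact (hβ.le_iff_of_isCartesian f').2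
    ⟨f ≫ g, by rw [L.map_comp, SingleObj.comp_as_mul, hg, one_mul, hf]⟩

/-- The action of `M` on `P` by pullback in the fibration `L`: the value at `p` and `m` is the class
of the domain of a cartesian morphism over `m` into a representative of `p`. -/
noncomputable def act [L.IsPreFibered] (hβ : IsPosetReflection L β) (p : P) (m : M) : P :=
  β (exists_isCartesian_map_eq (L := L) (Function.surjInv hβ.surjective p) m).choose

theorem act_eq_of_isCartesian [L.IsPreFibered] (hβ : IsPosetReflection L β) {x y : 𝒜} (f : x ⟶ y)
    [L.IsCartesian (L.map f) f] : hβ.act (β y) (L.map f) = β x := by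
  obtain ⟨g, _, hg⟩ := (exists_isCartesian_map_eq (L := L)
    (Function.surjInv hβ.surjective (β y)) (L.map f)).choose_spec
  have hy := Function.surjInv_eq hβ.surjective (β y)
  exact le_antisymm (hβ.le_of_isCartesian hy.le g f hg) (hβ.le_of_isCartesian hy.ge f g hg.symm)

theorem le_act_iff [L.IsPreFibered] (hβ : IsPosetReflection L β) {x y : 𝒜} {m : M} :
    β x ≤ hβ.act (β y) m ↔ ∃ f : x ⟶ y, L.map f = m := by
  obtain ⟨z, f, _, rfl⟩ := exists_isCartesian_map_eq (L := L) y m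
  rw [hβ.act_eq_of_isCartesian, hβ.le_iff_of_isCartesian f]

theorem act_one [L.IsPreFibered] (hβ : IsPosetReflection L β) (p : P) : hβ.act p 1 = p := by
  obtain ⟨y, rfl⟩ := hβ.surjective p
  have h : hβ.act (β y) (L.map (𝟙 y)) = β y := hβ.act_eq_of_isCartesian (𝟙 y)
  rwa [L.map_id, SingleObj.id_as_one] at h

theorem act_mul [L.IsFibered] (hβ : IsPosetReflection L β) (p : P) (m n : M) :
    hβ.act p (m * n) = hβ.act (hβ.act p m) n := by
  obtain ⟨z, rfl⟩ := hβ.surjective p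
  obtain ⟨y, g, _, rfl⟩ := exists_isCartesian_map_eq (L := L) z m
  obtain ⟨x, f, _, rfl⟩ := exists_isCartesian_map_eq (L := L) y n
  have : L.IsCartesian (L.map (f ≫ g)) (f ≫ g) := L.map_comp f g ▸ inferInstance
  calc hβ.act (β z) (L.map g * L.map f)
      = hβ.act (β z) (L.map (f ≫ g)) := by rw [L.map_comp, SingleObj.comp_as_mul]
    _ = β x := hβ.act_eq_of_isCartesian (f ≫ g)
    _ = hβ.act (hβ.act (β z) (L.map g)) (L.map f) := by
      rw [hβ.act_eq_of_isCartesian g, hβ.act_eq_of_isCartesian f]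

theorem act_mono [L.IsPreFibered] (hβ : IsPosetReflection L β) (m : M) {p q : P} (hpq : p ≤ q) :
    hβ.act p m ≤ hβ.act q m := by
  obtain ⟨y, rfl⟩ := hβ.surjective p
  obtain ⟨z, rfl⟩ := hβ.surjective q
  obtain ⟨x, f, _, rfl⟩ := exists_isCartesian_map_eq (L := L) y m
  obtain ⟨x', f', _, hf'⟩ := exists_isCartesian_map_eq (L := L) z (L.map f)
  rw [hβ.act_eq_of_isCartesian f, ← hf', hβ.act_eq_of_isCartesian f']
  exact hβ.le_of_isCartesian hpq f f' hf'.symm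

/-- The monotone right action of `M` on `P` by pullback. -/
noncomputable def rightAction [L.IsFibered] (hβ : IsPosetReflection L β) : RightAction M P where
  act := hβ.act
  act_one := hβ.act_one
  act_mul := hβ.act_mul
  act_mono m _ _ := hβ.act_mono m

/-- The comparison functor `𝒜 ⥤ P ⋊ M`, given by `β` on objects and by `L` on morphisms. -/
noncomputable def toGroth [L.IsFibered] (hβ : IsPosetReflection L β) :
    𝒜 ⥤ Groth hβ.rightAction where
  obj x := ⟨β x⟩
  map f := ⟨L.map f, hβ.le_act_iff.2 ⟨f, rfl⟩⟩
  map_id x := Subtype.ext (L.map_id x)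
  map_comp f g := Subtype.ext (L.map_comp f g)

theorem full_toGroth [L.IsFibered] (hβ : IsPosetReflection L β) : hβ.toGroth.Full where
  map_surjective g :=
    let ⟨f, hf⟩ := hβ.le_act_iff.1 g.2
    ⟨f, Subtype.ext hf⟩

theorem faithful_toGroth [L.IsFibered] [L.Faithful] (hβ : IsPosetReflection L β) :
    hβ.toGroth.Faithful where
  map_injective h := L.map_injective (congrArg Subtype.val h)

theorem essSurj_toGroth [L.IsFibered] (hβ : IsPosetReflection L β) : hβ.toGroth.EssSurj where
  mem_essImage p :=
    let ⟨x, hx⟩ := hβ.surjective p.pt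
    ⟨x, ⟨eqToIso (congrArg Groth.mk hx)⟩⟩

end IsPosetReflection

theorem stmt3_general (L : 𝒜 ⥤ SingleObj M) [L.IsFibered] [L.Faithful] (β : 𝒜 → P)
    (hβ : IsPosetReflection L β) :
    ∃ ρ : RightAction M P,
      (∀ (x y : 𝒜) (f : x ⟶ y), L.IsCartesian (L.map f) f → ρ.act (β y) (L.map f) = β x) ∧
      ∃ Φ : 𝒜 ⥤ Groth ρ,
        (∀ x : 𝒜, (Φ.obj x).pt = β x) ∧
        (∀ (x y : 𝒜) (f : x ⟶ y), (Φ.map f).1 = L.map f) ∧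
        Φ.Full ∧ Φ.Faithful ∧ Φ.EssSurj :=
  ⟨hβ.rightAction, fun _ _ f _ ↦ hβ.act_eq_of_isCartesian f, hβ.toGroth, fun _ ↦ rfl,
    fun _ _ _ ↦ rfl, hβ.full_toGroth, hβ.faithful_toGroth, hβ.essSurj_toGroth⟩

end Fibration

/-- Under the amalgamation hypotheses (A1)–(A6) for a category `𝒜`, a
poset `P` and a group `G`, there is a monotone right action of `G` on `P` (given by
`p · m = β x` for any isomorphism `f : x ≅ β' p` with `α (F f.hom) = m`) such that
`x ↦ β x`, `f ↦ α (F f)` is a well-defined functor from `𝒜` to the Grothendieck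
category `P ⋊ G`, and this functor is full, faithful and essentially surjective,
i.e. an equivalence of categories. -/
theorem stmt3 {𝒜 : Type u} [Category.{v} 𝒜] {P : Type w} [PartialOrder P]
    {G : Type x} [Group G]
    -- (A1): weakly initial object, unique up to isomorphism
    (O : 𝒜) (weakInit : ∀ y : 𝒜, Nonempty (O ⟶ y))
    (weakInitUnique : ∀ O' : 𝒜, (∀ y : 𝒜, Nonempty (O' ⟶ y)) → Nonempty (O ≅ O'))
    -- (A2): faithful retraction of the inclusion of the one-object category End(0)
    (F : ∀ {x y : 𝒜}, (x ⟶ y) → (O ⟶ O))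
    (F_id : ∀ x : 𝒜, F (𝟙 x) = 𝟙 O)
    (F_comp : ∀ {x y z : 𝒜} (f : x ⟶ y) (g : y ⟶ z), F (f ≫ g) = F f ≫ F g)
    (F_faithful : ∀ {x y : 𝒜} (f g : x ⟶ y), F f = F g → f = g)
    (F_retraction : ∀ f : O ⟶ O, F f = f)
    -- (A3): a monoid isomorphism α : End(0) → G
    (α : (O ⟶ O) → G) (α_bij : Function.Bijective α)
    (α_one : α (𝟙 O) = 1)
    (α_mul : ∀ f g : O ⟶ O, α (f ≫ g) = α g * α f)
    -- (A4): an equivalence of preorders between (Ob 𝒜, ≤) and P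
    (β : 𝒜 → P) (β' : P → 𝒜)
    (β_mono : ∀ x y : 𝒜, (∃ f : x ⟶ y, α (F f) = 1) → β x ≤ β y)
    (β'_mono : ∀ p q : P, p ≤ q → ∃ f : β' p ⟶ β' q, α (F f) = 1)
    (β_β' : ∀ p : P, β (β' p) = p)
    (β'_β_le : ∀ x : 𝒜, ∃ f : β' (β x) ⟶ x, α (F f) = 1)
    (le_β'_β : ∀ x : 𝒜, ∃ f : x ⟶ β' (β x), α (F f) = 1)
    -- (A5)
    (A5 : ∀ x : 𝒜, ∃ f : x ≅ β' (β x), α (F f.hom) = 1)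
    -- (A6)
    (A6 : ∀ (y : 𝒜) (m : G), ∃ (x : 𝒜) (f : x ≅ y), α (F f.hom) = m) :
    ∃ ρ : RightAction G P,
      (∀ (p : P) (m : G) (x : 𝒜) (f : x ≅ β' p), α (F f.hom) = m → ρ.act p m = β x) ∧
      ∃ Φ : 𝒜 ⥤ Groth ρ,
        (∀ x : 𝒜, (Φ.obj x).pt = β x) ∧
        (∀ (x y : 𝒜) (f : x ⟶ y), ((Φ.map f).1 : G) = α (F f)) ∧
        Φ.Full ∧ Φ.Faithful ∧ Φ.EssSurj := by
  let L : 𝒜 ⥤ SingleObj G :=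
    { obj := fun _ ↦ SingleObj.star G
      map := fun f ↦ α (F f)
      map_id := fun x ↦ by rw [F_id, α_one, SingleObj.id_as_one]
      map_comp := fun f g ↦ by rw [F_comp, α_mul, SingleObj.comp_as_mul] }
  have : L.Faithful := ⟨fun h ↦ F_faithful _ _ (α_bij.1 h)⟩
  have : L.IsFibered := isFibered_of_exists_iso_map_eq A6
  obtain ⟨ρ, hρ, hΦ⟩ :=
    stmt3_general L β (.of_quasiInverse β_mono β'_mono β_β' β'_β_le le_β'_β)
  exact ⟨ρ, fun p m x f hf ↦ β_β' p ▸ hf ▸ hρ x (β' p) f.hom (isCartesian_map_hom L f), hΦ⟩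
end

section
/- For every natural number n, the map sending an equivalence relation p on Fin n to the set {x : Fin n → ℂ | ∀ i j, p i j → x i = x j} is a bijection from Setoid (Fin n) onto the set of unital star-subalgebras of the C*-algebra Fin n → ℂ (pointwise operations, pointwise complex conjugation as star), and it is order-reversing in both directions: p ≤ q if and only if the subalgebra associated to q is contained in the subalgebra associated to p. In particular, the poset of unital star-subalgebras of ℂⁿ ordered by inclusion is order-isomorphic to the order dual of the partition lattice P(n). -/
universe u

/-- The unital star-subalgebra of `Fin n → ℂ` associated to a partition
(equivalence relation) `p` of `Fin n`: the functions constant on the blocks of `p`. -/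
def partitionSubalgebra (n : ℕ) (p : Setoid (Fin n)) : StarSubalgebra ℂ (Fin n → ℂ) where
  carrier := {x : Fin n → ℂ | ∀ i j : Fin n, p i j → x i = x j}
  mul_mem' := fun {a b} ha hb i j h => by simp only [Pi.mul_apply, ha i j h, hb i j h]
  add_mem' := fun {a b} ha hb i j h => by simp only [Pi.add_apply, ha i j h, hb i j h]
  one_mem' := fun i j _ => rfl
  zero_mem' := fun i j _ => rfl
  algebraMap_mem' := fun c i j _ => rfl
  star_mem' := fun {a} ha i j h => by simp only [Pi.star_apply, ha i j h]

/-!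
The inverse of the map sends a subalgebra `S` to the relation "every element of `S` takes the same
value at `i` and `j`". If some `x ∈ S` separates `i` from `j`, then `(x i - x j)⁻¹ • (x - x j)` is
an element of `S` equal to `1` at `i` and to `0` at `j`; multiplying such elements over all `j`
not related to `i` gives the indicator function of the block of `i`. So `S` contains the
indicators of all blocks, and these span the functions constant on blocks.
-/

/-- The relation on `ι` that identifies the points not separated by any function in `S`, i.e. the
intersection of the kernels of these functions. It recovers a partition from its subalgebra. -/
def jointKer {ι α : Type*} (S : Set (ι → α)) : Setoid ι where
  r i j := ∀ x ∈ S, x i = x j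
  iseqv :=
    ⟨fun _ _ _ => rfl, fun h x hx => (h x hx).symm, fun h h' x hx => (h x hx).trans (h' x hx)⟩

/-- The functions `ι → R` constant on the blocks of `p`, as a unital star-subalgebra: the analogue
of `partitionSubalgebra` for an arbitrary index type and an arbitrary commutative star-semiring. -/
def blockStarSubalgebra {ι : Type*} (R : Type*) [CommSemiring R] [StarRing R] (p : Setoid ι) :
    StarSubalgebra R (ι → R) where
  carrier := {x | ∀ i j, p i j → x i = x j}
  mul_mem' ha hb i j h := congrArg₂ (· * ·) (ha i j h) (hb i j h)
  add_mem' ha hb i j h := congrArg₂ (· + ·) (ha i j h) (hb i j h)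
  algebraMap_mem' _ _ _ _ := rfl
  star_mem' ha i j h := congrArg star (ha i j h)

section StarSemiring

variable {ι R : Type*} [CommSemiring R] [StarRing R]

theorem le_blockStarSubalgebra_iff {S : StarSubalgebra R (ι → R)} {p : Setoid ι} :
    S ≤ blockStarSubalgebra R p ↔ p ≤ jointKer (S : Set (ι → R)) :=
  ⟨fun h i j hij _ hx => h hx i j hij, fun h x hx _ _ hij => h hij x hx⟩

theorem indicator_block_mem_blockStarSubalgebra (p : Setoid ι) (i : ι) :
    {k | p i k}.indicator 1 ∈ blockStarSubalgebra R p := by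
  classical
  intro j k hjk
  have hiff : p i j ↔ p i k := ⟨fun h => p.trans h hjk, fun h => p.trans h (p.symm hjk)⟩
  simp only [Set.indicator_apply, Set.mem_ofPred_eq, hiff, Pi.one_apply]

theorem jointKer_blockStarSubalgebra [Nontrivial R] (p : Setoid ι) :
    jointKer (blockStarSubalgebra R p : Set (ι → R)) = p := by
  refine le_antisymm (fun i j hij => ?_) (le_blockStarSubalgebra_iff.1 le_rfl)
  by_contra hp
  have heq := hij _ (indicator_block_mem_blockStarSubalgebra p i)
  have hi : i ∈ {k | p i k} := p.refl i
  have hj : j ∉ {k | p i k} := hp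
  rw [Set.indicator_of_mem hi, Set.indicator_of_notMem hj] at heq
  exact one_ne_zero heq

theorem blockStarSubalgebra_le_iff [Nontrivial R] {p q : Setoid ι} :
    blockStarSubalgebra R q ≤ blockStarSubalgebra R p ↔ p ≤ q := by
  rw [le_blockStarSubalgebra_iff, jointKer_blockStarSubalgebra]

end StarSemiring

theorem comp_eq_sum_smul_indicator_preimage {ι κ R : Type*} [Fintype κ] [Semiring R]
    (f : κ → R) (g : ι → κ) :
    f ∘ g = ∑ q, f q • (g ⁻¹' {q}).indicator (1 : ι → R) := by
  classical
  funext i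
  simp [Set.indicator_apply]

section Field

variable {ι K : Type*} [Field K]

theorem exists_mem_eq_one_eq_zero (S : Subalgebra K (ι → K)) {i j : ι}
    (hij : ¬ jointKer (S : Set (ι → K)) i j) : ∃ f ∈ S, f i = 1 ∧ f j = 0 := by
  obtain ⟨x, hx, hne⟩ : ∃ x ∈ S, x i ≠ x j := by
    by_contra! h
    exact hij h
  exact ⟨(x i - x j)⁻¹ • (x - algebraMap K (ι → K) (x j)),
    S.smul_mem (sub_mem hx (S.algebraMap_mem _)) _, by simp [sub_ne_zero.2 hne], by simp⟩

variable [Finite ι]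

theorem indicator_block_jointKer_mem (S : Subalgebra K (ι → K)) (i : ι) :
    {k | jointKer (S : Set (ι → K)) i k}.indicator 1 ∈ S := by
  cases nonempty_fintype ι
  let p := jointKer (S : Set (ι → K))
  have hsep (j : ι) : ∃ f ∈ S, f i = 1 ∧ (¬ p i j → f j = 0) := by
    by_cases hij : p i j
    · exact ⟨1, one_mem S, rfl, fun h => absurd hij h⟩
    · obtain ⟨f, hf, hfi, hfj⟩ := exists_mem_eq_one_eq_zero S hij
      exact ⟨f, hf, hfi, fun _ => hfj⟩
  choose f hfS hfi hfj using hsep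
  have hprod : {k | p i k}.indicator 1 = ∏ j, f j := by
    funext k
    rw [Finset.prod_apply]
    by_cases hik : k ∈ {k | p i k}
    · rw [Set.indicator_of_mem hik]
      exact (Finset.prod_eq_one fun j _ => (hik (f j) (hfS j)).symm.trans (hfi j)).symm
    · rw [Set.indicator_of_notMem hik]
      exact Eq.symm (Finset.prod_eq_zero (Finset.mem_univ k) (hfj k hik))
  rw [hprod]
  exact prod_mem fun j _ => hfS j

theorem mem_of_jointKer_le_ker (S : Subalgebra K (ι → K)) {x : ι → K}
    (hx : jointKer (S : Set (ι → K)) ≤ Setoid.ker x) : x ∈ S := by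
  classical
  cases nonempty_fintype ι
  let p := jointKer (S : Set (ι → K))
  have hblock (q : Quotient p) : (Quotient.mk p ⁻¹' {q}).indicator 1 ∈ S := by
    induction q using Quotient.inductionOn with
    | h i =>
      convert indicator_block_jointKer_mem S i using 2
      ext k
      exact Quotient.eq.trans p.comm'
  have hsum := comp_eq_sum_smul_indicator_preimage (Quotient.lift x fun _ _ h => hx h)
    (Quotient.mk p)
  change x = _ at hsum
  rw [hsum]
  exact sum_mem fun q _ => S.smul_mem (hblock q) _

theorem blockStarSubalgebra_jointKer [StarRing K] (S : StarSubalgebra K (ι → K)) :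
    blockStarSubalgebra K (jointKer (S : Set (ι → K))) = S :=
  le_antisymm (fun _ hx => mem_of_jointKer_le_ker S.toSubalgebra fun i j hij => hx i j hij)
    (le_blockStarSubalgebra_iff.2 le_rfl)

variable (ι K) in
/-- The correspondence between partitions of a finite type and unital star-subalgebras of `ι → K`,
with the inverse given by `jointKer`. -/
def blockStarSubalgebraOrderIso [StarRing K] : (Setoid ι)ᵒᵈ ≃o StarSubalgebra K (ι → K) where
  toFun p := blockStarSubalgebra K (OrderDual.ofDual p)
  invFun S := OrderDual.toDual (jointKer (S : Set (ι → K)))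
  left_inv p := congrArg OrderDual.toDual (jointKer_blockStarSubalgebra (OrderDual.ofDual p))
  right_inv := blockStarSubalgebra_jointKer
  map_rel_iff' := blockStarSubalgebra_le_iff

theorem stmt4_general [StarRing K] :
    Function.Bijective (blockStarSubalgebra K : Setoid ι → StarSubalgebra K (ι → K)) ∧
    (∀ p q : Setoid ι, p ≤ q ↔ blockStarSubalgebra K q ≤ blockStarSubalgebra K p) ∧
    Nonempty ((Setoid ι)ᵒᵈ ≃o StarSubalgebra K (ι → K)) :=
  ⟨(blockStarSubalgebraOrderIso ι K).bijective.comp OrderDual.toDual.bijective,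
    fun _ _ => blockStarSubalgebra_le_iff.symm, ⟨blockStarSubalgebraOrderIso ι K⟩⟩

end Field

/-- For every natural number `n`, the map sending an equivalence
relation `p` on `Fin n` to `{x : Fin n → ℂ | ∀ i j, p i j → x i = x j}` is a
bijection from `Setoid (Fin n)` onto the unital star-subalgebras of the
C*-algebra `Fin n → ℂ`, and it is order-reversing in both directions:
`p ≤ q ↔ partitionSubalgebra n q ≤ partitionSubalgebra n p`.  In particular, the
poset of unital star-subalgebras of `ℂⁿ` under inclusion is order-isomorphic to
the order dual of the partition lattice `P(n) = Setoid (Fin n)`. -/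
theorem stmt4 (n : ℕ) :
    Function.Bijective (partitionSubalgebra n) ∧
    (∀ p q : Setoid (Fin n),
      p ≤ q ↔ partitionSubalgebra n q ≤ partitionSubalgebra n p) ∧
    Nonempty ((Setoid (Fin n))ᵒᵈ ≃o StarSubalgebra ℂ (Fin n → ℂ)) :=
  stmt4_general
end

section
/- Let ι be a nonempty finite type, let (A i) be a family of nontrivial unital C*-algebras indexed by ι, and for each i let D i be a commutative unital closed star-subalgebra of A i that is weakly terminal, i.e. every commutative unital closed star-subalgebra of A i admits an injective unital star-algebra homomorphism into D i. Then the product subalgebra Π i, D i is a commutative unital closed star-subalgebra of the product C*-algebra Π i, A i (with pointwise operations and supremum norm), and it is weakly terminal: every commutative unital closed star-subalgebra C of Π i, A i admits an injective unital star-algebra homomorphism into Π i, D i. -/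
universe u v

/-- A commutative unital closed star-subalgebra of `A`, bundled with an injectivity
category structure elsewhere; here only the data is needed. -/
structure CommSub (A : Type u) [Ring A] [StarRing A] [Algebra ℂ A] [StarModule ℂ A]
    [TopologicalSpace A] : Type u where
  sub : StarSubalgebra ℂ A
  comm : ∀ x ∈ sub, ∀ y ∈ sub, x * y = y * x
  closed : IsClosed (sub : Set A)

/-- The product `Π i, S i` of a family of star-subalgebras, as a star-subalgebra of
the product algebra `Π i, A i`. -/
def piStarSubalgebra {ι : Type v} {A : ι → Type u}
    [∀ i, Ring (A i)] [∀ i, StarRing (A i)] [∀ i, Algebra ℂ (A i)]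
    [∀ i, StarModule ℂ (A i)]
    (S : ∀ i, StarSubalgebra ℂ (A i)) : StarSubalgebra ℂ (∀ i, A i) where
  carrier := {x | ∀ i, x i ∈ S i}
  mul_mem' := fun {a b} ha hb i => mul_mem (ha i) (hb i)
  add_mem' := fun {a b} ha hb i => add_mem (ha i) (hb i)
  one_mem' := fun i => one_mem (S i)
  zero_mem' := fun i => zero_mem (S i)
  algebraMap_mem' := fun c i => (S i).algebraMap_mem c
  star_mem' := fun {a} ha i => star_mem (ha i)

/-! Project a commutative subalgebra `C` of `Π i, A i` to each coordinate and take closures. These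
closures are again commutative, so they embed into the `D i`. The resulting maps `C → D i` jointly
separate the points of `C`, because the coordinates do. -/

section Pi

variable {ι : Type v} {A : ι → Type u}
  [∀ i, Ring (A i)] [∀ i, StarRing (A i)] [∀ i, Algebra ℂ (A i)] [∀ i, StarModule ℂ (A i)]

theorem coe_piStarSubalgebra (S : ∀ i, StarSubalgebra ℂ (A i)) :
    (piStarSubalgebra S : Set (∀ i, A i)) = Set.univ.pi fun i => (S i : Set (A i)) :=
  Set.ext fun _ => Set.mem_univ_pi.symm

theorem isClosed_piStarSubalgebra [∀ i, TopologicalSpace (A i)] {S : ∀ i, StarSubalgebra ℂ (A i)}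
    (hS : ∀ i, IsClosed (S i : Set (A i))) : IsClosed (piStarSubalgebra S : Set (∀ i, A i)) := by
  rw [coe_piStarSubalgebra]
  exact isClosed_set_pi fun i _ => hS i

theorem commute_of_mem_piStarSubalgebra {S : ∀ i, StarSubalgebra ℂ (A i)}
    (hS : ∀ i, ∀ x ∈ S i, ∀ y ∈ S i, x * y = y * x) {x y : ∀ i, A i}
    (hx : x ∈ piStarSubalgebra S) (hy : y ∈ piStarSubalgebra S) : Commute x y :=
  funext fun i => hS i (x i) (hx i) (y i) (hy i)

/-- The star-algebra homomorphism into a product of star-subalgebras with given components. -/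
def piStarSubalgebra.lift {B : Type*} [Semiring B] [Algebra ℂ B] [Star B]
    {S : ∀ i, StarSubalgebra ℂ (A i)} (f : ∀ i, B →⋆ₐ[ℂ] S i) : B →⋆ₐ[ℂ] piStarSubalgebra S where
  toAlgHom := (AlgHom.pi fun i => ((S i).subtype.comp (f i)).toAlgHom).codRestrict
    (piStarSubalgebra S).toSubalgebra fun b i => (f i b).2
  map_star' b := Subtype.ext <| funext fun i => congrArg Subtype.val (map_star (f i) b)

theorem piStarSubalgebra.lift_eq_lift_iff {B : Type*} [Semiring B] [Algebra ℂ B] [Star B]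
    {S : ∀ i, StarSubalgebra ℂ (A i)} (f : ∀ i, B →⋆ₐ[ℂ] S i) {x y : B} :
    lift f x = lift f y ↔ ∀ i, f i x = f i y := by
  simp only [Subtype.ext_iff, funext_iff]
  rfl

end Pi

namespace CommSub

variable {A : Type*} [Ring A] [StarRing A] [Algebra ℂ A] [StarModule ℂ A] [TopologicalSpace A]

/-- `D` is weakly terminal among the commutative unital closed star-subalgebras of `A`, with
injective unital star-homomorphisms as morphisms. -/
def IsWeaklyTerminal (D : CommSub A) : Prop :=
  ∀ C : CommSub A, ∃ f : C.sub →⋆ₐ[ℂ] D.sub, Function.Injective f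

variable {B : Type*} [Ring B] [StarRing B] [Algebra ℂ B] [StarModule ℂ B] [TopologicalSpace B]
  [IsSemitopologicalRing B] [ContinuousStar B] [T2Space B]

/-- The closure of the image of a commutative star-subalgebra under a star-algebra homomorphism;
the image itself need not be closed. -/
def mapClosure (φ : A →⋆ₐ[ℂ] B) (C : CommSub A) : CommSub B where
  sub := (C.sub.map φ).topologicalClosure
  comm x hx y hy := by
    have map_comm : ∀ x y : C.sub.map φ, x * y = y * x := by
      rintro ⟨_, a, ha, rfl⟩ ⟨_, b, hb, rfl⟩
      have commute_ab : Commute a b := C.comm a ha b hb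
      exact Subtype.ext (commute_ab.map φ)
    let _ := (C.sub.map φ).commRingTopologicalClosure map_comm
    exact congrArg Subtype.val (mul_comm (⟨x, hx⟩ : (C.sub.map φ).topologicalClosure) ⟨y, hy⟩)
  closed := (C.sub.map φ).isClosed_topologicalClosure

/-- The restriction of `φ` to a map from `C` to the closure of its image. -/
def toMapClosure (φ : A →⋆ₐ[ℂ] B) (C : CommSub A) : C.sub →⋆ₐ[ℂ] (C.mapClosure φ).sub :=
  (φ.comp C.sub.subtype).codRestrict _ fun c =>
    (C.sub.map φ).le_topologicalClosure ⟨c, c.2, rfl⟩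

theorem IsWeaklyTerminal.exists_starAlgHom_eq_iff {D : CommSub B} (hD : D.IsWeaklyTerminal)
    (C : CommSub A) (φ : A →⋆ₐ[ℂ] B) :
    ∃ f : C.sub →⋆ₐ[ℂ] D.sub, ∀ x y : C.sub, f x = f y ↔ φ x = φ y := by
  obtain ⟨g, hg⟩ := hD (C.mapClosure φ)
  exact ⟨g.comp (C.toMapClosure φ), fun _ _ => hg.eq_iff.trans Subtype.ext_iff⟩

end CommSub

theorem stmt7_general {ι : Type v} {A : ι → Type u}
    [∀ i, Ring (A i)] [∀ i, StarRing (A i)] [∀ i, Algebra ℂ (A i)] [∀ i, StarModule ℂ (A i)]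
    [∀ i, TopologicalSpace (A i)] [∀ i, IsSemitopologicalRing (A i)] [∀ i, ContinuousStar (A i)]
    [∀ i, T2Space (A i)]
    (D : ∀ i, CommSub (A i)) (hD : ∀ i, (D i).IsWeaklyTerminal) :
    (∀ x ∈ piStarSubalgebra (fun i => (D i).sub),
      ∀ y ∈ piStarSubalgebra (fun i => (D i).sub), x * y = y * x) ∧
    IsClosed ((piStarSubalgebra (fun i => (D i).sub) : Set (∀ i, A i))) ∧
    (∀ C : CommSub (∀ i, A i),
      ∃ f : C.sub →⋆ₐ[ℂ] piStarSubalgebra (fun i => (D i).sub),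
        Function.Injective f) := by
  refine ⟨fun x hx y hy => commute_of_mem_piStarSubalgebra (fun i => (D i).comm) hx hy,
    isClosed_piStarSubalgebra fun i => (D i).closed, fun C => ?_⟩
  choose f hf using fun i => (hD i).exists_starAlgHom_eq_iff C (Pi.evalStarAlgHom ℂ A i)
  refine ⟨piStarSubalgebra.lift f, fun x y hxy => Subtype.ext <| funext fun i => ?_⟩
  exact (hf i x y).1 ((piStarSubalgebra.lift_eq_lift_iff f).1 hxy i)

/-- Let `ι` be a nonempty finite type, `A i` nontrivial unital
C*-algebras, and `D i` a weakly terminal commutative unital closed star-subalgebra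
of `A i` for each `i`.  Then `Π i, D i` is a commutative unital closed
star-subalgebra of the product C*-algebra `Π i, A i`, and it is weakly terminal:
every commutative unital closed star-subalgebra `C` of `Π i, A i` admits an
injective unital star-algebra homomorphism into `Π i, D i`. -/
theorem stmt7 {ι : Type v} [Finite ι] [Nonempty ι]
    {A : ι → Type u}
    [∀ i, NormedRing (A i)] [∀ i, StarRing (A i)] [∀ i, CStarRing (A i)]
    [∀ i, CompleteSpace (A i)] [∀ i, NormedAlgebra ℂ (A i)] [∀ i, StarModule ℂ (A i)]
    [∀ i, Nontrivial (A i)]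
    (D : ∀ i, CommSub (A i))
    (hD : ∀ (i : ι) (C : CommSub (A i)),
      ∃ f : C.sub →⋆ₐ[ℂ] (D i).sub, Function.Injective f) :
    (∀ x ∈ piStarSubalgebra (fun i => (D i).sub),
      ∀ y ∈ piStarSubalgebra (fun i => (D i).sub), x * y = y * x) ∧
    IsClosed ((piStarSubalgebra (fun i => (D i).sub) : Set (∀ i, A i))) ∧
    (∀ C : CommSub (∀ i, A i),
      ∃ f : C.sub →⋆ₐ[ℂ] piStarSubalgebra (fun i => (D i).sub),
        Function.Injective f) :=
  stmt7_general D hD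
end

section
/- Let H be an infinite-dimensional complex Hilbert space and let B(H) = H →L[ℂ] H be the C*-algebra of bounded linear operators on H. Then there exists a commutative unital closed star-subalgebra D of B(H) which is weakly terminal: every commutative unital closed star-subalgebra C of B(H) admits an injective unital star-algebra homomorphism C → D. -/
universe u

/-!
Let `b` be a Hilbert basis of `H` indexed by `ι`, and let `C ≅ C(X)` be a commutative
C⋆-subalgebra of `B(H)`. A unit vector `ξ` has a spectral measure `μ` on `X`, a probability measure
for which `‖f‖` in `L²(μ)` is `‖f ξ‖`. Countable approximations of the projections of the `b i` onto
the cyclic subspace `closure (C ξ)` give continuous functions `a k`, `k ∈ ι × ℕ`, with dense span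
in `L²(μ)`, so every `f ∈ C(X)` is `μ`-almost everywhere a function of `(a k)_k : X → ℂ ^ (ι × ℕ)`.
Every probability law on `ℂ ^ (ι × ℕ)` is the law of a random element defined on the cube
`I ^ (ι × ℕ)`: sample the coordinates by transfinite recursion, each one from its conditional law
given the previous ones. Hence `C(X)` acts on `L²(I ^ (ι × ℕ))` by multiplication operators in such
a way that `f` moves the constant `1` by a vector of norm `‖f ξ‖`. Doing this for each `ξ = b i`
gives a faithful action of `C` on `⨁ ι, L²(I ^ (ι × ℕ))` by block-diagonal multiplication operators.
For infinite `ι` that Hilbert space has dimension `#ι`, hence is isometric to `H`, and neither it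
nor the algebra of block-diagonal multiplication operators depends on `C`.
-/

open MeasureTheory ProbabilityTheory unitInterval Set
open scoped ENNReal

section Transfer

lemma map_prodMk_eq_compProd_of_indepFun {Ω A B V : Type*} [MeasurableSpace Ω]
    [MeasurableSpace A] [MeasurableSpace B] [MeasurableSpace V] {P : Measure Ω}
    [IsProbabilityMeasure P] {X : Ω → A} {U : Ω → V} (hX : Measurable X) (hU : Measurable U)
    (hXU : IndepFun X U P) {κ : Kernel A B} [IsSFiniteKernel κ] {f : A → V → B}
    (hf : Measurable (Function.uncurry f)) (hfκ : ∀ a, (P.map U).map (f a) = κ a) :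
    P.map (fun ω => (X ω, f (X ω) (U ω))) = P.map X ⊗ₘ κ := by
  have : IsProbabilityMeasure (P.map X) := Measure.isProbabilityMeasure_map hX.aemeasurable
  have : IsProbabilityMeasure (P.map U) := Measure.isProbabilityMeasure_map hU.aemeasurable
  have hg : Measurable fun p : A × V => (p.1, f p.1 p.2) := measurable_fst.prodMk hf
  have hlaw : P.map (fun ω => (X ω, f (X ω) (U ω))) =
      ((P.map X).prod (P.map U)).map fun p : A × V => (p.1, f p.1 p.2) := by
    rw [← hXU.map_prod_eq_prod_map_map hX.aemeasurable hU.aemeasurable,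
      Measure.map_map hg (hX.prodMk hU)]
    rfl
  ext s hs
  rw [hlaw, Measure.map_apply hg hs, Measure.prod_apply (hg hs), Measure.compProd_apply hs]
  refine lintegral_congr fun a => ?_
  rw [← hfκ a, Measure.map_apply hf.of_uncurry_left (measurable_prodMk_left hs)]
  rfl

lemma indep_cylinderEvents_infinitePi {ι : Type*} {E : ι → Type*} [∀ i, MeasurableSpace (E i)]
    (μ : ∀ i, Measure (E i)) [∀ i, IsProbabilityMeasure (μ i)] {s t : Set ι} (hst : Disjoint s t) :
    Indep (cylinderEvents s) (cylinderEvents t) (Measure.infinitePi μ) :=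
  indep_iSup_of_disjoint (fun i => (measurable_pi_apply i).comap_le)
    (iIndepFun_infinitePi (X := fun _ x => x) fun _ => measurable_id) hst

variable {ι : Type*} [LinearOrder ι] {E V : ι → Type*}

section

variable [∀ i, MeasurableSpace (E i)] {μ ν : Measure (∀ i, E i)} [IsProbabilityMeasure μ]
  [IsProbabilityMeasure ν]

lemma map_finsetRestrict_eq_of_map_Iio_eq (J : Finset ι)
    (h : ∀ b ∈ J, μ.map (fun x => ((Iio b).domRestrict x, x b)) =
      ν.map (fun x => ((Iio b).domRestrict x, x b))) :
    μ.map J.restrict = ν.map J.restrict := by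
  rcases J.eq_empty_or_nonempty with rfl | hJ
  · have : IsProbabilityMeasure (μ.map (∅ : Finset ι).restrict) :=
      Measure.isProbabilityMeasure_map (by fun_prop)
    have : IsProbabilityMeasure (ν.map (∅ : Finset ι).restrict) :=
      Measure.isProbabilityMeasure_map (by fun_prop)
    ext A -
    rcases A.eq_empty_or_nonempty with rfl | hA
    · simp
    · rw [Subsingleton.eq_univ_of_nonempty hA, measure_univ, measure_univ]
  · obtain ⟨b, hbJ, hb⟩ : ∃ b ∈ J, ∀ i ∈ J, i ≤ b := ⟨J.max' hJ, J.max'_mem hJ, J.le_max'⟩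
    let g : (∀ i : Iio b, E i) × E b → ∀ i : J, E i := fun p i =>
      if hi : i.1 < b then p.1 ⟨i.1, hi⟩
      else cast (congrArg E ((hb i i.2).eq_of_not_lt hi).symm) p.2
    have hg : Measurable g := by
      refine measurable_pi_lambda _ fun ⟨i, hi⟩ => ?_
      rcases (hb i hi).lt_or_eq with h | rfl
      · simp only [g, h, dif_pos]
        fun_prop
      · simp only [g, lt_irrefl, dif_neg, not_false_eq_true]
        exact measurable_snd
    have hgx (x : ∀ i, E i) : g ((Iio b).domRestrict x, x b) = J.restrict x := by
      funext ⟨i, hi⟩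
      rcases (hb i hi).lt_or_eq with h | rfl
      · simp [g, h]
      · simp [g]
    have hmap := congrArg (Measure.map g) (h b hbJ)
    rw [Measure.map_map hg (by fun_prop), Measure.map_map hg (by fun_prop)] at hmap
    simpa only [Function.comp_def, hgx] using hmap

lemma map_domRestrict_eq_of_map_Iio_eq (A : Set ι)
    (h : ∀ b ∈ A, μ.map (fun x => ((Iio b).domRestrict x, x b)) =
      ν.map (fun x => ((Iio b).domRestrict x, x b))) :
    μ.map A.domRestrict = ν.map A.domRestrict := by
  have : IsProbabilityMeasure (ν.map A.domRestrict) :=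
    Measure.isProbabilityMeasure_map (by fun_prop)
  refine IsProjectiveLimit.unique (P := fun J : Finset A => (ν.map A.domRestrict).map J.restrict)
    (fun J => ?_) (fun J => rfl)
  let J' : Finset ι := J.map (Function.Embedding.subtype (· ∈ A))
  let g : (∀ i : J', E i) → ∀ i : J, E i := fun x i =>
    x ⟨i, Finset.mem_map_of_mem (Function.Embedding.subtype (· ∈ A)) i.2⟩
  have hg : Measurable g := by fun_prop
  have hJ' : ∀ b ∈ J', b ∈ A := fun b hb => by
    obtain ⟨a, -, rfl⟩ := Finset.mem_map.1 hb
    exact a.2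
  have hmap := congrArg (Measure.map g)
    (map_finsetRestrict_eq_of_map_Iio_eq J' fun b hb => h b (hJ' b hb))
  rw [Measure.map_map hg (by fun_prop), Measure.map_map hg (by fun_prop)] at hmap
  simp only [Measure.map_map (Finset.measurable_restrict _) (Set.measurable_restrict A)]
  exact hmap

end

variable [WellFoundedLT ι]

/-- The family `x` built from innovations `u` by transfinite recursion: `x b` is computed by `f b`
from the earlier coordinates of `x` and from `u b`. -/
noncomputable def transfiniteRecursion (f : ∀ b, (∀ i : Iio b, E i) → V b → E b) (u : ∀ b, V b) :
    ∀ b, E b :=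
  wellFounded_lt.fix fun b x => f b (fun i => x i i.2) (u b)

lemma transfiniteRecursion_apply (f : ∀ b, (∀ i : Iio b, E i) → V b → E b) (u : ∀ b, V b) (b : ι) :
    transfiniteRecursion f u b =
      f b ((Iio b).domRestrict (transfiniteRecursion f u)) (u b) :=
  wellFounded_lt.fix_eq _ b

variable [∀ i, MeasurableSpace (E i)] [∀ i, MeasurableSpace (V i)]
  {f : ∀ b, (∀ i : Iio b, E i) → V b → E b}

lemma measurable_transfiniteRecursion_apply (hf : ∀ b, Measurable (Function.uncurry (f b)))
    (b : ι) : Measurable[cylinderEvents (Iic b)] fun u => transfiniteRecursion f u b := by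
  induction b using WellFoundedLT.induction with
  | ind b ih =>
    simp only [transfiniteRecursion_apply f _ b]
    refine (hf b).comp (Measurable.prodMk ?_ (measurable_cylinderEvent_apply (mem_Iic.2 le_rfl)))
    exact (@measurable_pi_iff _ _ _ (cylinderEvents (Iic b)) _ _).2 fun i =>
      (ih i i.2).mono (cylinderEvents_mono (Iic_subset_Iic.2 i.2.le)) le_rfl

lemma measurable_transfiniteRecursion_Iio (hf : ∀ b, Measurable (Function.uncurry (f b))) (b : ι) :
    Measurable[cylinderEvents (Iio b)]
      fun u => (Iio b).domRestrict (transfiniteRecursion f u) :=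
  (@measurable_pi_iff _ _ _ (cylinderEvents (Iio b)) _ _).2 fun i =>
    (measurable_transfiniteRecursion_apply hf i).mono
      (cylinderEvents_mono (Iic_subset_Iio.2 i.2)) le_rfl

lemma measurable_transfiniteRecursion (hf : ∀ b, Measurable (Function.uncurry (f b))) :
    Measurable (transfiniteRecursion f) :=
  measurable_pi_lambda _ fun b =>
    (measurable_transfiniteRecursion_apply hf b).mono cylinderEvents_le_pi le_rfl

lemma measurePreserving_transfiniteRecursion (hf : ∀ b, Measurable (Function.uncurry (f b)))
    (μ : ∀ b, Measure (V b)) [∀ b, IsProbabilityMeasure (μ b)] [∀ b, StandardBorelSpace (E b)]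
    [∀ b, Nonempty (E b)] (ν : Measure (∀ b, E b)) [IsProbabilityMeasure ν]
    (hfν : ∀ b x, (μ b).map (f b x) =
      condDistrib (fun x => x b) ((Iio b).domRestrict (π := E)) ν x) :
    MeasurePreserving (transfiniteRecursion f) (Measure.infinitePi μ) ν := by
  set P := Measure.infinitePi μ
  have hT := measurable_transfiniteRecursion hf
  have : IsProbabilityMeasure (P.map (transfiniteRecursion f)) :=
    Measure.isProbabilityMeasure_map hT.aemeasurable
  have hindep (b : ι) : IndepFun
      (fun u => (Iio b).domRestrict (transfiniteRecursion f u)) (fun u => u b) P := by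
    refine indep_of_indep_of_le_left (indep_of_indep_of_le_right
      (indep_cylinderEvents_infinitePi μ (s := Iio b) (t := {b}) (by simp)) ?_)
      (measurable_transfiniteRecursion_Iio hf b).comap_le
    exact (measurable_cylinderEvent_apply (mem_singleton b)).comap_le
  have hstep (b : ι) (hb : (P.map (transfiniteRecursion f)).map (Iio b).domRestrict =
      ν.map (Iio b).domRestrict) :
      (P.map (transfiniteRecursion f)).map (fun x => ((Iio b).domRestrict x, x b)) =
        ν.map (fun x => ((Iio b).domRestrict x, x b)) := by
    rw [Measure.map_map (by fun_prop) hT] at hb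
    rw [← compProd_map_condDistrib (μ := ν) (measurable_pi_apply b).aemeasurable, ← hb,
      Measure.map_map (by fun_prop) hT, Function.comp_def, Function.comp_def,
      ← map_prodMk_eq_compProd_of_indepFun (U := fun u => u b) (by fun_prop)
        (measurable_pi_apply b) (hindep b) (hf b)
        (fun x => by rw [Measure.infinitePi_map_eval, hfν])]
    simp only [transfiniteRecursion_apply f _ b]
  have hpast (b : ι) : (P.map (transfiniteRecursion f)).map (Iio b).domRestrict =
      ν.map (Iio b).domRestrict := by
    induction b using WellFoundedLT.induction with
    | ind b ih => exact map_domRestrict_eq_of_map_Iio_eq _ fun c hc => hstep c (ih c hc)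
  refine ⟨hT, IsProjectiveLimit.unique (P := fun J : Finset ι => ν.map J.restrict)
    (fun J => ?_) (fun J => rfl)⟩
  exact map_finsetRestrict_eq_of_map_Iio_eq J fun b _ => hstep b (hpast b)

end Transfer

/-- Lebesgue measure on the cube `I ^ κ`: the law of a family of independent uniform variables
indexed by `κ`. -/
noncomputable def cubeMeasure (κ : Type*) : Measure (κ → I) := Measure.infinitePi fun _ => volume

instance (κ : Type*) : IsProbabilityMeasure (cubeMeasure κ) :=
  inferInstanceAs (IsProbabilityMeasure (Measure.infinitePi _))

theorem exists_measurePreserving_cubeMeasure {ι : Type*} {E : ι → Type*}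
    [∀ i, MeasurableSpace (E i)] [∀ i, StandardBorelSpace (E i)] [∀ i, Nonempty (E i)]
    (ν : Measure (∀ i, E i)) [IsProbabilityMeasure ν] :
    ∃ T : (ι → I) → ∀ i, E i, MeasurePreserving T (cubeMeasure ι) ν := by
  obtain ⟨_, _⟩ := exists_wellFoundedLT ι
  choose f hf hfν using fun b : ι => Kernel.exists_measurable_map_eq_unitInterval
    (condDistrib (fun x => x b) ((Iio b).domRestrict (π := E)) ν)
  exact ⟨_, measurePreserving_transfiniteRecursion hf _ ν hfν⟩

section SpectralMeasure

variable {X : Type*} [TopologicalSpace X] [CompactSpace X] [MeasurableSpace X] [BorelSpace X]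

lemma exists_measure_integral_eq_of_nonneg [T2Space X] (Λ : C(X, ℝ) →ₗ[ℝ] ℝ)
    (hΛ : ∀ f, 0 ≤ f → 0 ≤ Λ f) :
    ∃ μ : Measure X, IsFiniteMeasure μ ∧ ∀ f : C(X, ℝ), ∫ x, f x ∂μ = Λ f := by
  let Λ' : CompactlySupportedContinuousMap X ℝ →ₗ[ℝ] ℝ :=
    { toFun f := Λ f
      map_add' f g := map_add Λ (f : C(X, ℝ)) g
      map_smul' r f := map_smul Λ r (f : C(X, ℝ)) }
  let Λp : CompactlySupportedContinuousMap X ℝ →ₚ[ℝ] ℝ :=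
    PositiveLinearMap.mk₀ Λ' fun f hf => hΛ f hf
  exact ⟨RealRMK.rieszMeasure Λp, inferInstance, fun f =>
    RealRMK.integral_rieszMeasure Λp (CompactlySupportedContinuousMap.continuousMapEquiv f)⟩

lemma norm_toLp_two_sq {𝕜 : Type*} [RCLike 𝕜] (μ : Measure X) [IsFiniteMeasure μ]
    (f : C(X, 𝕜)) : ‖ContinuousMap.toLp 2 μ 𝕜 f‖ ^ 2 = ∫ x, ‖f x‖ ^ 2 ∂μ := by
  have h := ContinuousMap.inner_toLp (𝕜 := 𝕜) μ f f
  simp only [inner_self_eq_norm_sq_to_K, RCLike.mul_conj] at h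
  exact_mod_cast h

theorem exists_spectralMeasure [T2Space X] {H : Type*} [NormedAddCommGroup H]
    [InnerProductSpace ℂ H] [CompleteSpace H] (π : C(X, ℂ) →⋆ₐ[ℂ] (H →L[ℂ] H)) (ξ : H) :
    ∃ μ : Measure X, ∃ _ : IsFiniteMeasure μ,
      ∀ f : C(X, ℂ), ‖ContinuousMap.toLp 2 μ ℂ f‖ = ‖π f ξ‖ := by
  let ofReal : C(X, ℝ) →L[ℝ] C(X, ℂ) := RCLike.ofRealCLM.compLeftContinuous ℝ X
  let Λ : C(X, ℝ) →ₗ[ℝ] ℝ :=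
    { toFun f := (inner ℂ ξ (π (ofReal f) ξ)).re
      map_add' f g := by simp
      map_smul' r f := by
        rw [map_smul, ← Complex.coe_smul, map_smul]
        simp }
  have hΛ (g : C(X, ℂ)) (f : C(X, ℝ)) (hf : ofReal f = star g * g) : Λ f = ‖π g ξ‖ ^ 2 := by
    change (inner ℂ ξ (π (ofReal f) ξ)).re = _
    rw [hf, map_mul, map_star, mul_apply_eq_comp, ContinuousLinearMap.star_eq_adjoint,
      ContinuousLinearMap.adjoint_inner_right]
    exact inner_self_eq_norm_sq (𝕜 := ℂ) _
  obtain ⟨μ, hμ, hμΛ⟩ := exists_measure_integral_eq_of_nonneg Λ fun f hf => by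
    have hsqrt : ofReal f = star (ofReal ⟨fun x => √(f x), by fun_prop⟩) *
        ofReal ⟨fun x => √(f x), by fun_prop⟩ := by
      ext x
      simpa [ofReal, ← Complex.ofReal_mul] using (Real.mul_self_sqrt (hf x)).symm
    rw [hΛ _ f hsqrt]
    positivity
  refine ⟨μ, hμ, fun f => ?_⟩
  have hnorm : ofReal ⟨fun x => ‖f x‖ ^ 2, by fun_prop⟩ = star f * f := by
    ext x
    simp [ofReal, RCLike.conj_mul]
  rw [← pow_left_inj₀ (norm_nonneg _) (norm_nonneg _) two_ne_zero, norm_toLp_two_sq, ← hΛ f _ hnorm]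
  exact hμΛ ⟨fun x => ‖f x‖ ^ 2, by fun_prop⟩

end SpectralMeasure

section Density

lemma exists_forall_mem_closure_image_span {𝕜 H A ι : Type*} [RCLike 𝕜] [NormedAddCommGroup H]
    [InnerProductSpace 𝕜 H] [CompleteSpace H] [AddCommGroup A] [Module 𝕜 A] (b : HilbertBasis ι 𝕜 H)
    (L : A →ₗ[𝕜] H) :
    ∃ a : ι × ℕ → A, ∀ c : A, L c ∈ closure (L '' Submodule.span 𝕜 (range a)) := by
  let K := (LinearMap.range L).topologicalClosure
  have : CompleteSpace K := (Submodule.isClosed_topologicalClosure _).completeSpace_coe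
  have hK (c : A) : L c ∈ K := Submodule.le_topologicalClosure _ ⟨c, rfl⟩
  have hseq (i : ι) : ∃ a : ℕ → A,
      Filter.Tendsto (fun n => L (a n)) Filter.atTop (nhds (K.starProjection (b i))) := by
    obtain ⟨x, hx, hlim⟩ := mem_closure_iff_seq_limit.1 (K.starProjection_apply_mem (b i))
    choose a ha using hx
    exact ⟨a, by simpa only [ha] using hlim⟩
  choose a ha using hseq
  refine ⟨fun p => a p.1 p.2, fun c => ?_⟩
  let S := ((Submodule.span 𝕜 (range fun p : ι × ℕ => a p.1 p.2)).map L).topologicalClosure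
  have hS : IsClosed (S : Set H) := Submodule.isClosed_topologicalClosure _
  have hb : Submodule.span 𝕜 (range b) ≤ S.comap K.starProjection.toLinearMap := by
    rw [Submodule.span_le]
    rintro _ ⟨i, rfl⟩
    exact hS.mem_of_tendsto (ha i) (Filter.Eventually.of_forall fun n =>
      Submodule.le_topologicalClosure _
        (Submodule.mem_map_of_mem (Submodule.subset_span ⟨(i, n), rfl⟩)))
  have hproj : K.starProjection (L c) ∈ S := by
    have hle := Submodule.topologicalClosure_minimal _ hb (hS.preimage K.starProjection.continuous)
    rw [b.dense_span] at hle
    exact hle (x := L c) trivial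
  rwa [Submodule.starProjection_eq_self_iff.2 (hK c)] at hproj

lemma mem_closure_image_of_norm_eq {𝕜 A E F : Type*} [Ring 𝕜] [AddCommGroup A] [Module 𝕜 A]
    [SeminormedAddCommGroup E] [Module 𝕜 E] [SeminormedAddCommGroup F] [Module 𝕜 F]
    {L : A →ₗ[𝕜] E} {M : A →ₗ[𝕜] F} (h : ∀ c, ‖L c‖ = ‖M c‖) {s : Set A} {c : A}
    (hc : M c ∈ closure (M '' s)) : L c ∈ closure (L '' s) := by
  rw [Metric.mem_closure_iff] at hc ⊢
  intro ε hε
  obtain ⟨_, ⟨d, hd, rfl⟩, hlt⟩ := hc ε hε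
  refine ⟨L d, mem_image_of_mem L hd, ?_⟩
  rwa [dist_eq_norm, ← map_sub, h, map_sub, ← dist_eq_norm]

end Density

section Multiplication

variable {𝕜 α : Type*} [RCLike 𝕜] [MeasurableSpace α] {μ : Measure α}

/-- `T` is the operator of multiplication by the essentially bounded function `F` on `L²(μ)`. -/
structure IsMulBy (μ : Measure α) (F : α → 𝕜) (T : Lp 𝕜 2 μ →L[𝕜] Lp 𝕜 2 μ) : Prop where
  memLp : MemLp F ∞ μ
  apply_ae_eq (f : Lp 𝕜 2 μ) : T f =ᵐ[μ] F * f

lemma exists_isMulBy {F : α → 𝕜} (hF : MemLp F ∞ μ) :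
    ∃ T : Lp 𝕜 2 μ →L[𝕜] Lp 𝕜 2 μ, IsMulBy μ F T := by
  refine ⟨(ContinuousLinearMap.mul 𝕜 𝕜).holderL μ ∞ 2 2 (hF.toLp F), hF, fun f => ?_⟩
  filter_upwards [(ContinuousLinearMap.mul 𝕜 𝕜).coeFn_holder (r := 2) (hF.toLp F) f,
    hF.coeFn_toLp] with x hx hFx
  rw [ContinuousLinearMap.holderL_apply_apply, hx, hFx]
  rfl

namespace IsMulBy

variable {F G : α → 𝕜} {S T : Lp 𝕜 2 μ →L[𝕜] Lp 𝕜 2 μ}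

lemma eq_of_ae_eq (hS : IsMulBy μ F S) (hT : IsMulBy μ G T) (h : F =ᵐ[μ] G) : S = T := by
  ext1 f
  refine Lp.ext ((hS.apply_ae_eq f).trans (.trans ?_ (hT.apply_ae_eq f).symm))
  exact h.mul (ae_eq_refl f)

lemma algebraMap (c : 𝕜) :
    IsMulBy μ (fun _ => c) (algebraMap 𝕜 (Lp 𝕜 2 μ →L[𝕜] Lp 𝕜 2 μ) c) where
  memLp := memLp_top_const c
  apply_ae_eq f := by
    rw [ContinuousLinearMap.algebraMap_apply]
    exact Lp.coeFn_smul c f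

lemma add (hS : IsMulBy μ F S) (hT : IsMulBy μ G T) : IsMulBy μ (F + G) (S + T) where
  memLp := hS.memLp.add hT.memLp
  apply_ae_eq f := by
    filter_upwards [hS.apply_ae_eq f, hT.apply_ae_eq f, Lp.coeFn_add (S f) (T f)] with x hSx hTx hx
    rw [_root_.add_apply, hx, Pi.add_apply, hSx, hTx, ← Pi.add_apply, add_mul]

lemma mul (hS : IsMulBy μ F S) (hT : IsMulBy μ G T) : IsMulBy μ (F * G) (S * T) where
  memLp := hT.memLp.mul hS.memLp
  apply_ae_eq f := by
    filter_upwards [hS.apply_ae_eq (T f), hT.apply_ae_eq f] with x hSx hTx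
    simp only [mul_apply_eq_comp, hSx, hTx, Pi.mul_apply, mul_assoc]

lemma star (hT : IsMulBy μ F T) : IsMulBy μ (star F) (star T) := by
  obtain ⟨S, hS⟩ := exists_isMulBy hT.memLp.star
  suffices S = Star.star T from this ▸ hS
  rw [ContinuousLinearMap.star_eq_adjoint, ContinuousLinearMap.eq_adjoint_iff]
  intro f g
  rw [L2.inner_def, L2.inner_def]
  refine integral_congr_ae ?_
  filter_upwards [hS.apply_ae_eq f, hT.apply_ae_eq g] with x hSx hTx
  rw [hSx, hTx]
  simp only [RCLike.inner_apply, Pi.mul_apply, Pi.star_apply, map_mul, RCLike.star_def,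
    RCLike.conj_conj]
  ring

lemma norm_apply_const [IsFiniteMeasure μ] (hT : IsMulBy μ F T) :
    ‖T (Lp.const 2 μ 1)‖ = (eLpNorm F 2 μ).toReal := by
  rw [Lp.norm_def]
  congr 1
  refine eLpNorm_congr_ae ?_
  filter_upwards [hT.apply_ae_eq (Lp.const 2 μ 1), Lp.coeFn_const 2 μ (1 : 𝕜)] with x hTx hx
  rw [hTx, Pi.mul_apply, hx, Function.const_apply, mul_one]

end IsMulBy

/-- The algebra `L^∞(μ)`, represented on `L²(μ)` by multiplication operators. -/
def multiplicationOperators (𝕜 : Type*) [RCLike 𝕜] (μ : Measure α) :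
    StarSubalgebra 𝕜 (Lp 𝕜 2 μ →L[𝕜] Lp 𝕜 2 μ) where
  carrier := {T | ∃ F, IsMulBy μ F T}
  mul_mem' := fun ⟨_, hS⟩ ⟨_, hT⟩ => ⟨_, hS.mul hT⟩
  add_mem' := fun ⟨_, hS⟩ ⟨_, hT⟩ => ⟨_, hS.add hT⟩
  algebraMap_mem' c := ⟨_, .algebraMap c⟩
  star_mem' := fun ⟨_, hT⟩ => ⟨_, hT.star⟩

lemma multiplicationOperators_mul_comm {S T : Lp 𝕜 2 μ →L[𝕜] Lp 𝕜 2 μ}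
    (hS : S ∈ multiplicationOperators 𝕜 μ) (hT : T ∈ multiplicationOperators 𝕜 μ) :
    S * T = T * S := by
  obtain ⟨F, hF⟩ := hS
  obtain ⟨G, hG⟩ := hT
  exact (hF.mul hG).eq_of_ae_eq (hG.mul hF) (by rw [mul_comm])

end Multiplication

section MeasurePreserving

variable {X Y Z E : Type*} [MeasurableSpace X] [MeasurableSpace Y] [MeasurableSpace Z]
  {μ : Measure X} {ν : Measure Y} {P : Measure Z} {Φ : X → Y} {S : Z → Y}

lemma comp_ae_eq_comp_of_measurePreserving [MeasurableSpace E] [MeasurableEq E]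
    (hΦ : MeasurePreserving Φ μ ν) (hS : MeasurePreserving S P ν) {g h : Y → E}
    (hg : Measurable g) (hh : Measurable h) (hgh : g ∘ Φ =ᵐ[μ] h ∘ Φ) : g ∘ S =ᵐ[P] h ∘ S := by
  have hν : g =ᵐ[ν] h := by
    rw [← hΦ.map_eq]
    exact (ae_map_iff hΦ.aemeasurable (measurableSet_eq_fun hg hh)).2 hgh
  exact hS.quasiMeasurePreserving.ae_eq_comp hν

lemma eLpNorm_comp_eq_of_measurePreserving [NormedAddCommGroup E] {p : ℝ≥0∞}
    (hΦ : MeasurePreserving Φ μ ν) (hS : MeasurePreserving S P ν) {g : Y → E}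
    (hg : AEStronglyMeasurable g ν) : eLpNorm (g ∘ S) p P = eLpNorm (g ∘ Φ) p μ := by
  rw [eLpNorm_comp_measurePreserving hg hS, eLpNorm_comp_measurePreserving hg hΦ]

end MeasurePreserving

section Factor

variable {X : Type*} [TopologicalSpace X] [CompactSpace X] [MeasurableSpace X] [BorelSpace X]

lemma exists_measurable_comp_ae_eq {𝕜 κ : Type*} [RCLike 𝕜] {μ : Measure X} [IsFiniteMeasure μ]
    {a : κ → C(X, 𝕜)} {f : C(X, 𝕜)}
    (hf : ContinuousMap.toLp 2 μ 𝕜 f ∈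
      closure (ContinuousMap.toLp 2 μ 𝕜 '' Submodule.span 𝕜 (range a))) :
    ∃ g : (κ → 𝕜) → 𝕜, Measurable g ∧ g ∘ (fun x k => a k x) =ᵐ[μ] f := by
  have hΦ : Measurable fun x k => a k x := by fun_prop
  have hmp : MeasurePreserving (fun x k => a k x) μ (μ.map fun x k => a k x) := ⟨hΦ, rfl⟩
  let V := Lp.compMeasurePreservingₗᵢ (E := 𝕜) (p := 2) 𝕜 _ hmp
  have hV : IsClosed (LinearMap.range V.toLinearMap : Set (Lp 𝕜 2 μ)) := by
    rw [LinearMap.coe_range]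
    exact V.isometry.isClosedEmbedding.isClosed_range
  have hspan : Submodule.span 𝕜 (range a) ≤
      (LinearMap.range V.toLinearMap).comap (ContinuousMap.toLp 2 μ 𝕜).toLinearMap := by
    rw [Submodule.span_le]
    rintro _ ⟨k, rfl⟩
    have hmem : MemLp (fun y : κ → 𝕜 => y k) 2 (μ.map fun x k => a k x) := by
      rw [memLp_map_measure_iff (measurable_pi_apply k).aestronglyMeasurable hΦ.aemeasurable]
      exact MemLp.of_bound (a k).continuous.aestronglyMeasurable ‖a k‖
        (.of_forall (a k).norm_coe_le_norm)
    refine ⟨hmem.toLp _, Lp.ext ?_⟩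
    filter_upwards [(hmem.comp_measurePreserving hmp).coeFn_toLp,
      ContinuousMap.coeFn_toLp (p := 2) (𝕜 := 𝕜) μ (a k)] with x hx hax
    exact hx.trans hax.symm
  obtain ⟨g, hg⟩ : ContinuousMap.toLp 2 μ 𝕜 f ∈ LinearMap.range V.toLinearMap :=
    closure_minimal (t := LinearMap.range V.toLinearMap) (image_subset_iff.2 hspan) hV hf
  refine ⟨g, (Lp.stronglyMeasurable g).measurable, ?_⟩
  filter_upwards [Lp.coeFn_compMeasurePreserving g hmp,
    ContinuousMap.coeFn_toLp (p := 2) (𝕜 := 𝕜) μ f] with x hx hfx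
  rw [← hx, ← hfx, ← hg]
  rfl

lemma exists_starAlgHom_isMulBy {𝕜 Y Z : Type*} [RCLike 𝕜] [MeasurableSpace Y] [MeasurableSpace Z]
    {μ : Measure X} {ν : Measure Y} {P : Measure Z} {Φ : X → Y} {S : Z → Y}
    (hΦ : MeasurePreserving Φ μ ν) (hS : MeasurePreserving S P ν)
    (hfac : ∀ f : C(X, 𝕜), ∃ g : Y → 𝕜, Measurable g ∧ g ∘ Φ =ᵐ[μ] f) :
    ∃ ρ : C(X, 𝕜) →⋆ₐ[𝕜] (Lp 𝕜 2 P →L[𝕜] Lp 𝕜 2 P),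
      ∀ f : C(X, 𝕜), ∃ g : Y → 𝕜, Measurable g ∧ g ∘ Φ =ᵐ[μ] f ∧ IsMulBy P (g ∘ S) (ρ f) := by
  choose g hgm hg using hfac
  have hbdd (f : C(X, 𝕜)) : MemLp (g f ∘ S) ∞ P := by
    refine MemLp.comp_measurePreserving ?_ hS
    rw [← hΦ.map_eq, memLp_map_measure_iff (hgm f).aestronglyMeasurable hΦ.aemeasurable,
      memLp_congr_ae (hg f)]
    exact memLp_top_of_bound f.continuous.aestronglyMeasurable ‖f‖ (.of_forall f.norm_coe_le_norm)
  choose ρ hρ using fun f => exists_isMulBy (hbdd f)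
  have heq {f : C(X, 𝕜)} {h : Y → 𝕜} {T} (hT : IsMulBy P (h ∘ S) T) (hm : Measurable h)
      (hf : h ∘ Φ =ᵐ[μ] f) : ρ f = T :=
    (hρ f).eq_of_ae_eq hT
      (comp_ae_eq_comp_of_measurePreserving hΦ hS (hgm f) hm ((hg f).trans hf.symm))
  have hconst (c : 𝕜) : ρ (algebraMap 𝕜 _ c) = algebraMap 𝕜 _ c :=
    heq (h := fun _ => c) (.algebraMap c) measurable_const .rfl
  refine ⟨
    { toFun := ρ
      map_one' := by simpa using hconst 1
      map_mul' f h := heq (h := g f * g h) ((hρ f).mul (hρ h)) ((hgm f).mul (hgm h))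
        ((hg f).mul (hg h))
      map_zero' := by simpa using hconst 0
      map_add' f h := heq (h := g f + g h) ((hρ f).add (hρ h)) ((hgm f).add (hgm h))
        ((hg f).add (hg h))
      commutes' := hconst
      map_star' f := heq (h := star (g f)) (hρ f).star (continuous_star.measurable.comp (hgm f))
        ((hg f).fun_comp star) },
    fun f => ⟨g f, hgm f, hg f, hρ f⟩⟩

end Factor

section CyclicVector

variable {X : Type*} [TopologicalSpace X] [CompactSpace X]

lemma exists_starAlgHom_norm_apply_const_eq_norm_toLp [MeasurableSpace X] [BorelSpace X]
    {κ : Type*} {μ : Measure X} [IsProbabilityMeasure μ] {a : κ → C(X, ℂ)}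
    (ha : ∀ f : C(X, ℂ), ContinuousMap.toLp 2 μ ℂ f ∈
      closure (ContinuousMap.toLp 2 μ ℂ '' (Submodule.span ℂ (range a) : Set C(X, ℂ)))) :
    ∃ ρ : C(X, ℂ) →⋆ₐ[ℂ] (Lp ℂ 2 (cubeMeasure κ) →L[ℂ] Lp ℂ 2 (cubeMeasure κ)),
      (∀ f, ρ f ∈ multiplicationOperators ℂ (cubeMeasure κ)) ∧
        ∀ f, ‖ρ f (Lp.const 2 (cubeMeasure κ) 1)‖ = ‖ContinuousMap.toLp 2 μ ℂ f‖ := by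
  have hΦ : MeasurePreserving (fun x k => a k x) μ (μ.map fun x k => a k x) :=
    ⟨by fun_prop, rfl⟩
  have : IsProbabilityMeasure (μ.map fun x k => a k x) :=
    Measure.isProbabilityMeasure_map hΦ.aemeasurable
  obtain ⟨S, hS⟩ := exists_measurePreserving_cubeMeasure (μ.map fun x k => a k x)
  obtain ⟨ρ, hρ⟩ := exists_starAlgHom_isMulBy hΦ hS fun f =>
    exists_measurable_comp_ae_eq (ha f)
  refine ⟨ρ, fun f => ?_, fun f => ?_⟩ <;> obtain ⟨g, hgm, hg, hgρ⟩ := hρ f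
  · exact ⟨_, hgρ⟩
  · rw [hgρ.norm_apply_const,
      eLpNorm_comp_eq_of_measurePreserving hΦ hS hgm.aestronglyMeasurable,
      eLpNorm_congr_ae (hg.trans (ContinuousMap.coeFn_toLp (p := 2) (𝕜 := ℂ) μ f).symm),
      ← Lp.norm_def]

theorem exists_starAlgHom_norm_apply_const_eq [T2Space X] {H ι : Type*}
    [NormedAddCommGroup H] [InnerProductSpace ℂ H] [CompleteSpace H] (b : HilbertBasis ι ℂ H)
    (π : C(X, ℂ) →⋆ₐ[ℂ] (H →L[ℂ] H)) {ξ : H} (hξ : ‖ξ‖ = 1) :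
    ∃ ρ : C(X, ℂ) →⋆ₐ[ℂ] (Lp ℂ 2 (cubeMeasure (ι × ℕ)) →L[ℂ] Lp ℂ 2 (cubeMeasure (ι × ℕ))),
      (∀ f, ρ f ∈ multiplicationOperators ℂ (cubeMeasure (ι × ℕ))) ∧
        ∀ f, ‖ρ f (Lp.const 2 (cubeMeasure (ι × ℕ)) 1)‖ = ‖π f ξ‖ := by
  borelize X
  obtain ⟨μ, _, hμ⟩ := exists_spectralMeasure π ξ
  have : IsProbabilityMeasure μ := by
    have h := norm_toLp_two_sq (𝕜 := ℂ) μ 1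
    rw [hμ, map_one] at h
    refine isProbabilityMeasure_iff_real.2 ?_
    simpa [hξ] using h.symm
  let L : C(X, ℂ) →ₗ[ℂ] H := (ContinuousLinearMap.apply ℂ H ξ).toLinearMap ∘ₗ π.toLinearMap
  obtain ⟨a, ha⟩ := exists_forall_mem_closure_image_span b L
  have hdense (f : C(X, ℂ)) := mem_closure_image_of_norm_eq
    (L := (ContinuousMap.toLp 2 μ ℂ).toLinearMap) hμ (ha f)
  simpa only [hμ] using exists_starAlgHom_norm_apply_const_eq_norm_toLp hdense

end CyclicVector

section DirectSum

variable {ι 𝕜 : Type*} [RCLike 𝕜] {G : ι → Type*} [∀ i, NormedAddCommGroup (G i)]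
  [∀ i, InnerProductSpace 𝕜 (G i)] [∀ i, CompleteSpace (G i)]

lemma adjoint_apply_of_apply {T : lp G 2 →L[𝕜] lp G 2} {t : ∀ i, G i →L[𝕜] G i}
    (h : ∀ x i, T x i = t i (x i)) (x : lp G 2) (i : ι) : star T x i = star (t i) (x i) := by
  classical
  have hsingle (y : G i) : T (lp.single 2 i y) = lp.single 2 i (t i y) := by
    ext j
    rw [h]
    obtain rfl | hj := eq_or_ne j i
    · simp only [lp.single_apply_self]
    · simp only [lp.single_apply_ne _ _ _ hj, map_zero]
  refine ext_inner_left 𝕜 fun y => ?_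
  rw [ContinuousLinearMap.star_eq_adjoint, ContinuousLinearMap.star_eq_adjoint,
    ContinuousLinearMap.adjoint_inner_right, ← lp.inner_single_left,
    ContinuousLinearMap.adjoint_inner_right, hsingle, lp.inner_single_left]

/-- The operators on the Hilbert sum `lp G 2` that act on each summand `G i` through an element of
`S i`. -/
def blockDiagonal (S : ∀ i, StarSubalgebra 𝕜 (G i →L[𝕜] G i)) :
    StarSubalgebra 𝕜 (lp G 2 →L[𝕜] lp G 2) where
  carrier := {T | ∃ t : ∀ i, G i →L[𝕜] G i, (∀ i, t i ∈ S i) ∧ ∀ x i, T x i = t i (x i)}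
  mul_mem' := fun ⟨s, hs, hS⟩ ⟨t, ht, hT⟩ =>
    ⟨s * t, fun i => mul_mem (hs i) (ht i), fun x i => by
      rw [mul_apply_eq_comp, hS, hT, Pi.mul_apply, mul_apply_eq_comp]⟩
  add_mem' := fun ⟨s, hs, hS⟩ ⟨t, ht, hT⟩ =>
    ⟨s + t, fun i => add_mem (hs i) (ht i), fun x i => by
      rw [add_apply, lp.coeFn_add, Pi.add_apply, hS, hT, Pi.add_apply, add_apply]⟩
  algebraMap_mem' c := ⟨fun _ => algebraMap 𝕜 _ c, fun _ => algebraMap_mem _ c, fun _ _ => rfl⟩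
  star_mem' := fun ⟨t, ht, hT⟩ =>
    ⟨star t, fun i => star_mem (ht i), adjoint_apply_of_apply hT⟩

lemma blockDiagonal_mul_comm {S : ∀ i, StarSubalgebra 𝕜 (G i →L[𝕜] G i)}
    (hS : ∀ i, ∀ s ∈ S i, ∀ t ∈ S i, s * t = t * s) {T U : lp G 2 →L[𝕜] lp G 2}
    (hT : T ∈ blockDiagonal S) (hU : U ∈ blockDiagonal S) : T * U = U * T := by
  obtain ⟨t, ht, hT⟩ := hT
  obtain ⟨u, hu, hU⟩ := hU
  ext x i
  rw [mul_apply_eq_comp, mul_apply_eq_comp, hT, hU, hU, hT, ← mul_apply_eq_comp,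
    hS i _ (ht i) _ (hu i), mul_apply_eq_comp]

end DirectSum

section DirectSumHom

variable {ι : Type*} {G : ι → Type*} [∀ i, NormedAddCommGroup (G i)]
  [∀ i, InnerProductSpace ℂ (G i)] [∀ i, CompleteSpace (G i)] {A : Type*} [CStarAlgebra A]

/-- The direct sum of a family of representations of a C⋆-algebra on Hilbert spaces. -/
noncomputable def directSumRep (ρ : ∀ i, A →⋆ₐ[ℂ] (G i →L[ℂ] G i)) :
    A →⋆ₐ[ℂ] (lp G 2 →L[ℂ] lp G 2) where
  toFun a := lp.mapCLM 2 (fun i => ρ i a) (norm_nonneg a)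
    fun i => NonUnitalStarAlgHom.norm_apply_le (ρ i) a
  map_one' := by ext; simp
  map_mul' a b := by ext; simp
  map_zero' := by ext; simp
  map_add' a b := by ext; simp
  commutes' c := by ext; simp [Algebra.algebraMap_eq_smul_one]
  map_star' a := by
    ext x i
    rw [adjoint_apply_of_apply (t := fun i => ρ i a) fun _ _ => rfl, ← map_star]
    rfl

lemma directSumRep_mem_blockDiagonal {ρ : ∀ i, A →⋆ₐ[ℂ] (G i →L[ℂ] G i)}
    {S : ∀ i, StarSubalgebra ℂ (G i →L[ℂ] G i)} {a : A} (h : ∀ i, ρ i a ∈ S i) :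
    directSumRep ρ a ∈ blockDiagonal S :=
  ⟨_, h, fun _ _ => rfl⟩

lemma eq_zero_of_directSumRep_eq_zero {ρ : ∀ i, A →⋆ₐ[ℂ] (G i →L[ℂ] G i)} {a : A}
    (h : directSumRep ρ a = 0) (i : ι) : ρ i a = 0 := by
  classical
  ext x
  simpa [directSumRep] using congr($h (lp.single 2 i x) i)

end DirectSumHom

section Dimension

universe v
variable {𝕜 : Type*} [RCLike 𝕜]

lemma exists_hilbertBasis_lp {ι : Type*} {J : ι → Type*} {G : ι → Type*}
    [∀ i, NormedAddCommGroup (G i)] [∀ i, InnerProductSpace 𝕜 (G i)] [∀ i, CompleteSpace (G i)]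
    (b : ∀ i, HilbertBasis (J i) 𝕜 (G i)) : Nonempty (HilbertBasis (Σ i, J i) 𝕜 (lp G 2)) := by
  classical
  have horth : Orthonormal 𝕜 fun p : Σ i, J i => lp.single (E := G) 2 p.1 (b p.1 p.2) := by
    rw [orthonormal_iff_ite]
    rintro ⟨i, j⟩ ⟨k, l⟩
    rw [lp.inner_single_left]
    obtain rfl | hik := eq_or_ne i k
    · simp [orthonormal_iff_ite.1 (b i).orthonormal]
    · simp [hik]
  refine ⟨HilbertBasis.mkOfOrthogonalEqBot horth ((Submodule.eq_bot_iff _).2 fun x hx => ?_)⟩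
  ext i
  refine (b i).repr.map_eq_zero_iff.1 ?_
  ext j
  rw [HilbertBasis.repr_apply_apply, ← lp.inner_single_left]
  exact hx _ (Submodule.subset_span ⟨⟨i, j⟩, rfl⟩)

lemma mk_hilbertBasis_le_of_forall_inner_eq_zero {E : Type*} {J S : Type v} [NormedAddCommGroup E]
    [InnerProductSpace 𝕜 E] [Infinite S] (b : HilbertBasis J 𝕜 E) (s : S → E)
    (hs : ∀ x, (∀ i, inner 𝕜 (s i) x = 0) → x = 0) : Cardinal.mk J ≤ Cardinal.mk S := by
  let N (i : S) : Set J := {j | inner 𝕜 (s i) (b j) ≠ 0}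
  have hN (i : S) : (N i).Countable := by
    refine (b.summable_inner_mul_inner (s i) (s i)).countable_support.mono fun j hj => ?_
    exact mul_ne_zero hj fun h => hj (inner_eq_zero_symm.1 h)
  have hcover : ⋃ i, N i = univ := by
    by_contra! h
    obtain ⟨j, hj⟩ := (ne_univ_iff_exists_notMem _).1 h
    simp only [N, mem_iUnion, mem_ofPred_eq, not_exists, not_not] at hj
    exact b.orthonormal.ne_zero j (hs _ hj)
  calc Cardinal.mk J = Cardinal.mk (⋃ i, N i) := by rw [hcover, Cardinal.mk_univ]
    _ ≤ Cardinal.mk S * ⨆ i, Cardinal.mk (N i) := Cardinal.mk_iUnion_le _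
    _ ≤ Cardinal.mk S * Cardinal.aleph0 := by
        gcongr
        exact ciSup_le' fun i => (hN i).le_aleph0
    _ = Cardinal.mk S := Cardinal.mul_aleph0_eq (Cardinal.aleph0_le_mk S)

lemma isPiSystem_range_biInter {α κ : Type*} (s : κ → Set α) :
    IsPiSystem (range fun t : Finset κ => ⋂ k ∈ t, s k) := by
  classical
  rintro _ ⟨t, rfl⟩ _ ⟨u, rfl⟩ _
  exact ⟨t ∪ u, Finset.set_biInter_inter t u s⟩

lemma generateFrom_range_biInter {α κ : Type*} (s : κ → Set α) :
    MeasurableSpace.generateFrom (range fun t : Finset κ => ⋂ k ∈ t, s k) =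
      MeasurableSpace.generateFrom (range s) := by
  refine le_antisymm (MeasurableSpace.generateFrom_le ?_) (MeasurableSpace.generateFrom_mono ?_)
  · rintro _ ⟨t, rfl⟩
    exact Finset.measurableSet_biInter t fun k _ => .basic _ (mem_range_self k)
  · rintro _ ⟨k, rfl⟩
    exact ⟨{k}, by simp⟩

lemma ae_eq_zero_of_forall_setIntegral_biInter_eq_zero {α κ E : Type*} {m : MeasurableSpace α}
    {μ : Measure α} [NormedAddCommGroup E] [NormedSpace ℝ E] [CompleteSpace E] {s : κ → Set α}
    (hm : m = MeasurableSpace.generateFrom (range s)) {f : α → E} (hf : Integrable f μ)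
    (h : ∀ t : Finset κ, ∫ x in ⋂ k ∈ t, s k, f x ∂μ = 0) : f =ᵐ[μ] 0 := by
  suffices ∀ u, MeasurableSet u → ∫ x in u, f x ∂μ = 0 from
    hf.ae_eq_zero_of_forall_setIntegral_eq_zero fun u hu _ => this u hu
  intro u hu
  induction u, hu using MeasurableSpace.induction_on_inter
    (hm.trans (generateFrom_range_biInter s).symm) (isPiSystem_range_biInter s) with
  | empty => rw [setIntegral_empty]
  | basic t ht => obtain ⟨t, rfl⟩ := ht; exact h t
  | compl t ht ih =>
    have huniv : ∫ x, f x ∂μ = 0 := by simpa using h ∅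
    rwa [← integral_add_compl ht hf, ih, zero_add] at huniv
  | iUnion t hd ht ih => rw [integral_iUnion ht hd hf.integrableOn, tsum_congr ih, tsum_zero]

lemma mk_hilbertBasis_Lp_two_le {J κ : Type v} {α : Type*} [Infinite κ] {m : MeasurableSpace α}
    {μ : Measure α} [IsFiniteMeasure μ] {s : κ → Set α}
    (hm : m = MeasurableSpace.generateFrom (range s)) (b : HilbertBasis J 𝕜 (Lp 𝕜 2 μ)) :
    Cardinal.mk J ≤ Cardinal.mk κ := by
  have hmeas (t : Finset κ) : MeasurableSet (⋂ k ∈ t, s k) := by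
    rw [hm]
    exact Finset.measurableSet_biInter t fun k _ => .basic _ (mem_range_self k)
  rw [← Cardinal.mk_finset_of_infinite κ]
  refine mk_hilbertBasis_le_of_forall_inner_eq_zero b
    (fun t => indicatorConstLp 2 (hmeas t) (measure_ne_top μ _) 1) fun f hf => ?_
  refine (Lp.eq_zero_iff_ae_eq_zero).2 (ae_eq_zero_of_forall_setIntegral_biInter_eq_zero hm
    ((Lp.memLp f).integrable one_le_two) fun t => ?_)
  rw [← L2.inner_indicatorConstLp_one (hmeas t) (measure_ne_top μ _), hf]

lemma pi_eq_generateFrom_range_preimage {κ β : Type*} {E : κ → Type*}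
    [m : ∀ k, MeasurableSpace (E k)] {s : ∀ k, β → Set (E k)}
    (hm : ∀ k, m k = MeasurableSpace.generateFrom (range (s k))) :
    MeasurableSpace.pi = MeasurableSpace.generateFrom
      (range fun p : κ × β => Function.eval p.1 ⁻¹' s p.1 p.2) := by
  refine le_antisymm (iSup_le fun k => ?_) (MeasurableSpace.generateFrom_le ?_)
  · rw [hm k, MeasurableSpace.comap_generateFrom, ← range_comp]
    exact MeasurableSpace.generateFrom_mono (range_subset_iff.2 fun j => ⟨(k, j), rfl⟩)
  · rintro _ ⟨⟨k, j⟩, rfl⟩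
    refine measurable_pi_apply k ?_
    rw [hm k]
    exact .basic _ (mem_range_self j)

lemma mk_prod_nat (κ : Type*) [Infinite κ] : Cardinal.mk (κ × ℕ) = Cardinal.mk κ := by
  rw [Cardinal.mk_prod, Cardinal.lift_uzero, Cardinal.mk_nat, Cardinal.lift_aleph0,
    Cardinal.mul_aleph0_eq (Cardinal.aleph0_le_mk κ)]

lemma mk_hilbertBasis_Lp_cubeMeasure_le {J κ : Type v} [Infinite κ]
    (b : HilbertBasis J 𝕜 (Lp 𝕜 2 (cubeMeasure κ))) : Cardinal.mk J ≤ Cardinal.mk κ := by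
  have hpi := pi_eq_generateFrom_range_preimage (E := fun _ : κ => I)
    fun _ => (MeasurableSpace.generateFrom_natGeneratingSequence I).symm
  exact (mk_hilbertBasis_Lp_two_le (κ := κ × ℕ) hpi b).trans_eq (mk_prod_nat κ)

lemma nonempty_of_hilbertBasis {J E : Type*} [NormedAddCommGroup E] [InnerProductSpace 𝕜 E]
    [Nontrivial E] (b : HilbertBasis J 𝕜 E) : Nonempty J := by
  by_contra! hJ
  exact not_subsingleton E b.repr.toEquiv.subsingleton

lemma nonempty_linearIsometryEquiv_of_hilbertBasis {J ι E F : Type*} [NormedAddCommGroup E]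
    [InnerProductSpace 𝕜 E] [CompleteSpace E] [NormedAddCommGroup F] [InnerProductSpace 𝕜 F]
    (e : J ≃ ι) (b : HilbertBasis J 𝕜 E) (c : HilbertBasis ι 𝕜 F) : Nonempty (E ≃ₗᵢ[𝕜] F) := by
  have hdense : ⊤ ≤ (Submodule.span 𝕜 (range (b ∘ e.symm))).topologicalClosure := by
    rw [e.symm.surjective.range_comp, b.dense_span]
  exact ⟨(HilbertBasis.mk (b.orthonormal.comp e.symm e.symm.injective) hdense).repr.trans
    c.repr.symm⟩

theorem nonempty_linearIsometryEquiv_lp_cubeMeasure {H : Type*} {ι : Type v} [Infinite ι]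
    [NormedAddCommGroup H] [InnerProductSpace ℂ H] (b : HilbertBasis ι ℂ H) :
    Nonempty (lp (fun _ : ι => Lp ℂ 2 (cubeMeasure (ι × ℕ))) 2 ≃ₗᵢ[ℂ] H) := by
  obtain ⟨J, bJ, -⟩ := exists_hilbertBasis ℂ (Lp ℂ 2 (cubeMeasure (ι × ℕ)))
  obtain ⟨c⟩ := exists_hilbertBasis_lp fun _ : ι => bJ
  have : Nontrivial (Lp ℂ 2 (cubeMeasure (ι × ℕ))) :=
    ⟨Lp.const 2 _ 1, 0, norm_ne_zero_iff.1 (by simp [Lp.norm_const'])⟩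
  have hJ : Cardinal.mk J ≤ Cardinal.mk ι :=
    (mk_hilbertBasis_Lp_cubeMeasure_le bJ).trans_eq (mk_prod_nat ι)
  have : Nonempty J := nonempty_of_hilbertBasis bJ
  obtain ⟨e⟩ : Nonempty ((Σ _ : ι, J) ≃ ι) := by
    rw [← Cardinal.eq, Cardinal.mk_sigma, Cardinal.sum_const',
      Cardinal.mul_eq_left (Cardinal.aleph0_le_mk ι) hJ (Cardinal.mk_ne_zero J)]
  exact nonempty_linearIsometryEquiv_of_hilbertBasis e c b

end Dimension

section Model

/-- The Hilbert sum of `ι` copies of `L²(I ^ (ι × ℕ))`, a model of the Hilbert space of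
dimension `#ι` when `ι` is infinite. -/
abbrev ModelSpace (ι : Type*) : Type _ := lp (fun _ : ι => Lp ℂ 2 (cubeMeasure (ι × ℕ))) 2

/-- The commutative algebra of block-diagonal multiplication operators on `ModelSpace ι`. -/
noncomputable def modelAlgebra (ι : Type*) :
    StarSubalgebra ℂ (ModelSpace ι →L[ℂ] ModelSpace ι) :=
  blockDiagonal fun _ => multiplicationOperators ℂ (cubeMeasure (ι × ℕ))

lemma modelAlgebra_mul_comm {ι : Type*} {S T : ModelSpace ι →L[ℂ] ModelSpace ι}
    (hS : S ∈ modelAlgebra ι) (hT : T ∈ modelAlgebra ι) : S * T = T * S := by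
  refine blockDiagonal_mul_comm
    (S := fun _ => multiplicationOperators ℂ (cubeMeasure (ι × ℕ))) ?_ hS hT
  exact fun _ _ hs _ ht => multiplicationOperators_mul_comm hs ht

variable {ι H : Type*} [NormedAddCommGroup H] [InnerProductSpace ℂ H] [CompleteSpace H]

lemma exists_injective_starAlgHom_modelAlgebra_of_continuousMap {X : Type*} [TopologicalSpace X]
    [CompactSpace X] [T2Space X] (b : HilbertBasis ι ℂ H) {π : C(X, ℂ) →⋆ₐ[ℂ] (H →L[ℂ] H)}
    (hπ : Function.Injective π) :
    ∃ τ : C(X, ℂ) →⋆ₐ[ℂ] modelAlgebra ι, Function.Injective τ := by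
  choose ρ hρ hnorm using fun i =>
    exists_starAlgHom_norm_apply_const_eq b π (b.orthonormal.norm_eq_one i)
  have hmem (f : C(X, ℂ)) : directSumRep ρ f ∈ modelAlgebra ι :=
    directSumRep_mem_blockDiagonal fun i => hρ i f
  refine ⟨(directSumRep ρ).codRestrict _ hmem, ?_⟩
  rw [StarAlgHom.injective_codRestrict, injective_iff_map_eq_zero]
  intro f hf
  have hb (i : ι) : π f (b i) = 0 := by
    rw [← norm_eq_zero, ← hnorm, eq_zero_of_directSumRep_eq_zero hf, zero_apply, norm_zero]
  have hπf : π f = 0 :=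
    ContinuousLinearMap.ext_on (Submodule.dense_iff_topologicalClosure_eq_top.2 b.dense_span)
      (forall_mem_range.2 hb)
  exact (map_eq_zero_iff π hπ).1 hπf

theorem exists_injective_starAlgHom_modelAlgebra {A : Type*} [CommCStarAlgebra A]
    (b : HilbertBasis ι ℂ H) {π : A →⋆ₐ[ℂ] (H →L[ℂ] H)} (hπ : Function.Injective π) :
    ∃ τ : A →⋆ₐ[ℂ] modelAlgebra ι, Function.Injective τ := by
  let e := gelfandStarTransform A
  obtain ⟨τ, hτ⟩ := exists_injective_starAlgHom_modelAlgebra_of_continuousMap b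
    (π := π.comp e.symm.toStarAlgHom) (hπ.comp e.symm.injective)
  exact ⟨τ.comp e.toStarAlgHom, hτ.comp e.injective⟩

end Model

section CommSub

variable {A : Type u}

/-- The closure of a commutative star-subalgebra. -/
def CommSub.closure [Ring A] [StarRing A] [Algebra ℂ A] [StarModule ℂ A] [TopologicalSpace A]
    [IsTopologicalRing A] [ContinuousStar A] [T2Space A] (S : StarSubalgebra ℂ A)
    (hS : ∀ x ∈ S, ∀ y ∈ S, x * y = y * x) : CommSub A where
  sub := S.topologicalClosure
  comm x hx y hy :=
    congrArg Subtype.val ((S.commRingTopologicalClosure fun x y =>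
      Subtype.ext (hS x x.2 y y.2)).mul_comm ⟨x, hx⟩ ⟨y, hy⟩)
  closed := S.isClosed_topologicalClosure

/-- A commutative closed star-subalgebra of a C⋆-algebra is itself a commutative C⋆-algebra. -/
noncomputable abbrev CommSub.commCStarAlgebra [CStarAlgebra A] (C : CommSub A) :
    CommCStarAlgebra C.sub :=
  have : IsClosed (C.sub : Set A) := C.closed
  { StarSubalgebra.cstarAlgebra C.sub with
    mul_comm x y := Subtype.ext (C.comm x x.2 y y.2) }

end CommSub

lemma exists_commSub_injective_of_linearIsometryEquiv {K : Type*} {H : Type u}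
    [NormedAddCommGroup K] [InnerProductSpace ℂ K] [CompleteSpace K] [NormedAddCommGroup H]
    [InnerProductSpace ℂ H] [CompleteSpace H] (U : K ≃ₗᵢ[ℂ] H) {M : StarSubalgebra ℂ (K →L[ℂ] K)}
    (hM : ∀ S ∈ M, ∀ T ∈ M, S * T = T * S) :
    ∃ D : CommSub (H →L[ℂ] H), ∃ g : M →⋆ₐ[ℂ] D.sub, Function.Injective g := by
  let Φ : (K →L[ℂ] K) →⋆ₐ[ℂ] (H →L[ℂ] H) := U.conjStarAlgEquiv.toStarAlgHom
  have hΦ : Function.Injective Φ := U.conjStarAlgEquiv.injective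
  have hcomm : ∀ S ∈ M.map Φ, ∀ T ∈ M.map Φ, S * T = T * S := by
    rintro _ ⟨S, hS, rfl⟩ _ ⟨T, hT, rfl⟩
    exact (map_mul Φ S T).symm.trans ((congrArg Φ (hM S hS T hT)).trans (map_mul Φ T S))
  have hmem (S : M) : Φ S ∈ (CommSub.closure _ hcomm).sub :=
    StarSubalgebra.le_topologicalClosure _ ⟨S, S.2, rfl⟩
  exact ⟨CommSub.closure _ hcomm, (Φ.comp M.subtype).codRestrict _ hmem,
    (StarAlgHom.injective_codRestrict _ _ _).2 (hΦ.comp Subtype.val_injective)⟩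

lemma infinite_of_hilbertBasis {𝕜 E ι : Type*} [RCLike 𝕜] [NormedAddCommGroup E]
    [InnerProductSpace 𝕜 E] (b : HilbertBasis ι 𝕜 E) (hE : ¬ FiniteDimensional 𝕜 E) :
    Infinite ι := by
  by_contra! h
  have := Fintype.ofFinite ι
  exact hE b.toOrthonormalBasis.toBasis.finiteDimensional_of_finite

/-- Let `H` be an infinite-dimensional complex Hilbert space and
`B(H) = H →L[ℂ] H` the C*-algebra of bounded linear operators on `H` (composition
as multiplication, adjoint as star, operator norm).  Then there exists a weakly
terminal commutative unital closed star-subalgebra `D` of `B(H)`: every commutative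
unital closed star-subalgebra `C` of `B(H)` admits an injective unital star-algebra
homomorphism `C → D`. -/
theorem stmt14 {H : Type u} [NormedAddCommGroup H] [InnerProductSpace ℂ H]
    [CompleteSpace H] (hH : ¬ FiniteDimensional ℂ H) :
    ∃ D : CommSub (H →L[ℂ] H),
      ∀ C : CommSub (H →L[ℂ] H),
        ∃ f : C.sub →⋆ₐ[ℂ] D.sub, Function.Injective f := by
  obtain ⟨ι, b, -⟩ := exists_hilbertBasis ℂ H
  have : Infinite ι := infinite_of_hilbertBasis b hH
  obtain ⟨U⟩ := nonempty_linearIsometryEquiv_lp_cubeMeasure b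
  obtain ⟨D, ⟨g, hg⟩⟩ := exists_commSub_injective_of_linearIsometryEquiv U
    (M := modelAlgebra ι) fun S hS T hT => modelAlgebra_mul_comm hS hT
  refine ⟨D, fun C => ?_⟩
  let := C.commCStarAlgebra
  obtain ⟨τ, hτ⟩ := exists_injective_starAlgHom_modelAlgebra b (π := C.sub.subtype)
    Subtype.val_injective
  exact ⟨g.comp τ, hg.comp hτ⟩
end
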